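/- arXiv:2405.01894 — 2 statements merged into one kernel-verified Lean document; each statement's English description precedes it below -/
import Mathlib

section
/- Let u be a non-negative strong solution to problem (Incl) with initial condition u_τ ∈ H. Then ∂u/∂t − ∂²u/∂x² ≥ 0 for almost all t > τ and almost all x ∈ (0,1); consequently ∂u/∂t − ∂²u/∂x² ≥ 0 also holds in the sense of distributions. -/
open MeasureTheory Set

noncomputable section

/-- Lebesgue measure restricted to the spatial interval `(0,1)`. -/
def μ01 : Measure ℝ := volume.restrict (Ioo (0:ℝ) 1)

/-- `H = L²(0,1)`. -/
abbrev Hsp : Type := Lp ℝ 2 μ01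

/-- The Heaviside multifunction. -/
def heaviside (s : ℝ) : Set ℝ :=
  if s < 0 then {-1} else if s = 0 then Icc (-1) 1 else {1}

/-- Condition (Cond1). -/
structure Cond1 (b ω : ℝ → ℝ) (b0 b1 ω0 ω1 : ℝ) : Prop where
  contb : Continuous b
  contω : Continuous ω
  b0pos : 0 < b0
  blb : ∀ t, b0 ≤ b t
  bub : ∀ t, b t ≤ b1
  ω0nonneg : 0 ≤ ω0
  ωlb : ∀ t, ω0 ≤ ω t
  ωub : ∀ t, ω t ≤ ω1

/-- `v ∈ H²(0,1) ∩ H¹₀(0,1)` with (weak) second derivative `w ∈ L²(0,1)`: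
`v` has a representative that is continuous on `[0,1]`, vanishes at the boundary,
is differentiable on `(0,1)` and whose derivative is an antiderivative of `w`. -/
def InDomainA (v w : Hsp) : Prop :=
  ∃ vt : ℝ → ℝ, ContinuousOn vt (Icc 0 1) ∧ vt 0 = 0 ∧ vt 1 = 0 ∧
    (∀ᵐ x ∂μ01, vt x = v x) ∧
    ∃ g : ℝ → ℝ,
      (∀ x ∈ Ioo (0:ℝ) 1, HasDerivAt vt (g x) x) ∧
      ∀ x ∈ Ioo (0:ℝ) 1, ∀ y ∈ Ioo (0:ℝ) 1, g x - g y = ∫ z in y..x, w z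

/-- A strong solution of the inclusion on `[τ,∞)`, with explicit data:
`r` is the `L²`-selection, `u'` the time derivative, `uxx` the second spatial derivative. -/
structure IsStrongSolutionWith (b ω : ℝ → ℝ) (τ : ℝ) (u r u' uxx : ℝ → Hsp) : Prop where
  cont : ContinuousOn u (Ici τ)
  rmem : ∀ T, τ < T → MemLp r 2 (volume.restrict (Ioo τ T))
  sel : ∀ᵐ t ∂(volume.restrict (Ioi τ)), ∀ᵐ x ∂μ01,
      ∃ h ∈ heaviside (u t x), r t x = b t * h + ω t * u t x
  dom : ∀ᵐ t ∂(volume.restrict (Ioi τ)), InDomainA (u t) (uxx t)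
  eq : ∀ᵐ t ∂(volume.restrict (Ioi τ)), u' t = r t + uxx t
  fund : ∀ T1 T2 : ℝ, τ < T1 → T1 < T2 →
      IntervalIntegrable u' volume T1 T2 ∧
      ∀ t ∈ Icc T1 T2, u t = u T1 + ∫ s in T1..t, u' s

/-- The solution is non-negative on `[τ,∞)`. -/
def NonnegOn (u : ℝ → Hsp) (τ : ℝ) : Prop :=
  ∀ t, τ ≤ t → ∀ᵐ x ∂μ01, 0 ≤ u t x

/-!
At almost every time `∂u/∂t − ∂²u/∂x² = r`, so the first claim is that the selection `r` is
non-negative. Where `u > 0`, the multifunction is single-valued and `r = b + ω u ≥ 0`. On the level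
set `{u(t, ·) = 0}` the inclusion says nothing about the sign of `r`, but an absolutely continuous
function has zero derivative almost everywhere on each of its level sets. Applied to `u(t, ·)` and
then to its spatial derivative, this gives `∂²u/∂x² = 0` there, whereas `∂u/∂t ≥ 0` there because
`u` is non-negative at later times; hence `r = ∂u/∂t ≥ 0`.

For the distributional form, integrate by parts in time in `L²(0,1)` and twice in space: the
function `u` solves `∂u/∂t − ∂²u/∂x² = r` weakly.
-/

open Filter Topology

section Calculus

variable {E F : Type*} [NormedAddCommGroup E] [NormedSpace ℝ E]
  [NormedAddCommGroup F] [NormedSpace ℝ F] {a b : ℝ} {s : Set ℝ}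

/- The isolated points of a level set are countable; at any other point of the level set the
derivative is determined by the restriction of the function to the level set. -/
theorem ae_deriv_eq_zero_of_eq_const (f : ℝ → E) (c : E) : ∀ᵐ x, f x = c → deriv f x = 0 := by
  have isolated_countable : {x ∈ f ⁻¹' {c} | 𝓝[f ⁻¹' {c} ∩ Ioi x] x = ⊥}.Countable :=
    countable_setOfPred_isolated_right_within
  filter_upwards [isolated_countable.ae_notMem volume] with x hx hxc
  by_cases hf : DifferentiableAt ℝ f x
  · have : (𝓝[f ⁻¹' {c} ∩ Ioi x] x).NeBot := ⟨fun h => hx ⟨hxc, h⟩⟩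
    have unique : UniqueDiffWithinAt ℝ (f ⁻¹' {c}) x := by
      rw [uniqueDiffWithinAt_iff_accPt, accPt_principal_iff_nhdsWithin]
      exact this.mono (nhdsWithin_mono _ fun y hy => ⟨hy.1, hy.2.ne'⟩)
    exact unique.eq_deriv _ hf.hasDerivAt.hasDerivWithinAt
      ((hasDerivWithinAt_const x _ c).congr (fun y hy => hy) hxc)
  · exact deriv_zero_of_not_differentiableAt hf

theorem absolutelyContinuousOnInterval_of_dist_le {X Y : Type*} [PseudoMetricSpace X]
    [PseudoMetricSpace Y] {f : ℝ → X} {g : ℝ → Y} (hg : AbsolutelyContinuousOnInterval g a b)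
    (h : ∀ x ∈ uIcc a b, ∀ y ∈ uIcc a b, dist (f x) (f y) ≤ dist (g x) (g y)) :
    AbsolutelyContinuousOnInterval f a b := by
  rw [absolutelyContinuousOnInterval_iff] at hg ⊢
  intro ε hε
  obtain ⟨δ, hδ, hgδ⟩ := hg ε hε
  refine ⟨δ, hδ, fun I hI hlen => (Finset.sum_le_sum fun i hi => ?_).trans_lt (hgδ I hI hlen)⟩
  exact h _ (hI.1 i hi).1 _ (hI.1 i hi).2

theorem absolutelyContinuousOnInterval_bilinear {G : Type*} [NormedAddCommGroup G]
    [NormedSpace ℝ G] (B : E →L[ℝ] F →L[ℝ] G) {f : ℝ → E} {g : ℝ → F}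
    (hf : AbsolutelyContinuousOnInterval f a b) (hg : AbsolutelyContinuousOnInterval g a b) :
    AbsolutelyContinuousOnInterval (fun x => B (f x) (g x)) a b := by
  obtain ⟨C, hC⟩ := hf.exists_bound
  obtain ⟨D, hD⟩ := hg.exists_bound
  have dist_le : ∀ x ∈ uIcc a b, ∀ y ∈ uIcc a b, dist (B (f x) (g x)) (B (f y) (g y)) ≤
      ‖B‖ * C * dist (g x) (g y) + ‖B‖ * D * dist (f x) (f y) := by
    intro x hx y hy
    have split : B (f x) (g x) - B (f y) (g y) = B (f x) (g x - g y) + B (f x - f y) (g y) := by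
      simp only [map_sub, sub_apply]
      abel
    simp only [dist_eq_norm]
    calc ‖B (f x) (g x) - B (f y) (g y)‖
        ≤ ‖B‖ * ‖f x‖ * ‖g x - g y‖ + ‖B‖ * ‖f x - f y‖ * ‖g y‖ := by
          rw [split]
          exact (norm_add_le _ _).trans (add_le_add (B.le_opNorm₂ _ _) (B.le_opNorm₂ _ _))
      _ ≤ ‖B‖ * C * ‖g x - g y‖ + ‖B‖ * ‖f x - f y‖ * D := by
          gcongr
          exacts [hC x hx, hD y hy]
      _ = _ := by ring
  unfold AbsolutelyContinuousOnInterval at hf hg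
  refine squeeze_zero' (Eventually.of_forall fun _ => Finset.sum_nonneg fun _ _ => dist_nonneg) ?_
    (by simpa using (hg.const_mul (‖B‖ * C)).add (hf.const_mul (‖B‖ * D)))
  rw [eventually_inf_principal]
  refine Eventually.of_forall fun I hI => ?_
  simp only [Finset.mul_sum, ← Finset.sum_add_distrib]
  exact Finset.sum_le_sum fun i hi => dist_le _ (hI.1 i hi).1 _ (hI.1 i hi).2

theorem exists_subset_Ioo_of_isCompact (hs : IsOpen s) {K : Set ℝ} (hK : IsCompact K)
    (hne : K.Nonempty) (hKs : K ⊆ s) : ∃ a ∈ s, ∃ b ∈ s, K ⊆ Ioo a b := by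
  obtain ⟨a, ha, has⟩ := (hs.eventually_mem (hKs (hK.sInf_mem hne))).exists_lt
  obtain ⟨b, hb, hbs⟩ := (hs.eventually_mem (hKs (hK.sSup_mem hne))).exists_gt
  exact ⟨a, has, b, hbs, fun x hx =>
    ⟨ha.trans_le (csInf_le hK.bddBelow hx), (le_csSup hK.bddAbove hx).trans_lt hb⟩⟩

theorem integrableOn_deriv_and_integral_eq_zero_of_hasCompactSupport {f : ℝ → ℝ} (hs : IsOpen s)
    (hf : ∀ a ∈ s, ∀ b ∈ s, AbsolutelyContinuousOnInterval f a b) (hc : HasCompactSupport f)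
    (hfs : tsupport f ⊆ s) : IntegrableOn (deriv f) s ∧ ∫ x in s, deriv f x = 0 := by
  rcases (tsupport f).eq_empty_or_nonempty with h | h
  · rw [tsupport_eq_empty_iff.1 h, deriv_zero]
    exact ⟨integrableOn_zero, integral_zero _ _⟩
  obtain ⟨a, ha, b, hb, hab⟩ := exists_subset_Ioo_of_isCompact hs hc h hfs
  have zero_of_notMem : ∀ x ∉ Ioo a b, f x = 0 := fun x hx =>
    image_eq_zero_of_notMem_tsupport fun h => hx (hab h)
  have support_deriv : Function.support (deriv f) ⊆ Ioc a b :=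
    support_deriv_subset.trans (hab.trans Ioo_subset_Ioc_self)
  have le : a ≤ b := by
    obtain ⟨x, hx⟩ := h
    exact ((hab hx).1.trans (hab hx).2).le
  have integrable : Integrable (deriv f) :=
    (integrableOn_iff_integrable_of_support_subset support_deriv).1
      ((intervalIntegrable_iff_integrableOn_Ioc_of_le le).1 (hf a ha b hb).intervalIntegrable_deriv)
  refine ⟨integrable.integrableOn, ?_⟩
  calc ∫ x in s, deriv f x
      = ∫ x, deriv f x := setIntegral_eq_integral_of_forall_compl_eq_zero fun x hx =>
        Function.notMem_support.1 fun h => hx (hfs (support_deriv_subset h))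
    _ = ∫ x in a..b, deriv f x := by
        rw [intervalIntegral.integral_of_le le, setIntegral_eq_integral_of_forall_compl_eq_zero]
        exact fun x hx => Function.notMem_support.1 fun h => hx (support_deriv h)
    _ = f b - f a := (hf a ha b hb).integral_deriv_eq_sub
    _ = 0 := by rw [zero_of_notMem b (by simp), zero_of_notMem a (by simp), sub_self]

/-- `f` is a locally absolutely continuous function on `s` with density `f'`, in the sense that `f`
is an indefinite Bochner integral of `f'` on `s`. This is the weak derivative relation on an
interval `s`; the values of `f` are the genuine ones, those of `f'` matter only almost
everywhere. -/
structure IsPrimitiveOn (f f' : ℝ → E) (s : Set ℝ) : Prop where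
  intervalIntegrable : ∀ x ∈ s, ∀ y ∈ s, IntervalIntegrable f' volume x y
  sub_eq_integral : ∀ x ∈ s, ∀ y ∈ s, f y - f x = ∫ z in x..y, f' z

namespace IsPrimitiveOn

variable {f f' : ℝ → E} {g g' : ℝ → F}

theorem of_hasDerivAt [CompleteSpace E] (hs : s.OrdConnected)
    (hf : ∀ x ∈ s, HasDerivAt f (f' x) x)
    (hf' : ∀ x ∈ s, ∀ y ∈ s, IntervalIntegrable f' volume x y) : IsPrimitiveOn f f' s where
  intervalIntegrable := hf'
  sub_eq_integral x hx y hy := (intervalIntegral.integral_eq_sub_of_hasDerivAt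
    (fun z hz => hf z (hs.uIcc_subset hx hy hz)) (hf' x hx y hy)).symm

theorem absolutelyContinuousOnInterval (hf : IsPrimitiveOn f f' s) (hs : s.OrdConnected)
    (ha : a ∈ s) (hb : b ∈ s) : AbsolutelyContinuousOnInterval f a b := by
  have integrable : ∀ x ∈ uIcc a b, IntervalIntegrable (fun z => ‖f' z‖) volume a x := fun x hx =>
    (hf.intervalIntegrable a ha x (hs.uIcc_subset ha hb hx)).norm
  refine absolutelyContinuousOnInterval_of_dist_le
    ((hf.intervalIntegrable a ha b hb).norm.absolutelyContinuousOnInterval_intervalIntegral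
      (c := a) left_mem_uIcc) fun x hx y hy => ?_
  rw [dist_comm, dist_eq_norm, dist_comm, Real.dist_eq,
    intervalIntegral.integral_interval_sub_left (integrable y hy) (integrable x hx),
    hf.sub_eq_integral x (hs.uIcc_subset ha hb hx) y (hs.uIcc_subset ha hb hy)]
  exact intervalIntegral.norm_integral_le_abs_integral_norm

theorem ae_hasDerivAt [CompleteSpace E] (hf : IsPrimitiveOn f f' s) (hs : s.OrdConnected) :
    ∀ᵐ x ∂volume.restrict s, HasDerivAt f (f' x) x := by
  rw [ae_restrict_iff' hs.measurableSet]
  refine ae_of_mem_of_ae_of_mem_inter_Ioo fun a b ha hb _ => ?_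
  filter_upwards [(hf.intervalIntegrable a ha b hb).ae_hasDerivAt_integral] with x hx hxab
  have deriv_integral := hx (Icc_subset_uIcc (Ioo_subset_Icc_self hxab.2)) a left_mem_uIcc
  refine (deriv_integral.const_add (f a)).congr_of_eventuallyEq ?_
  filter_upwards [isOpen_Ioo.mem_nhds hxab.2] with y hy
  rw [← hf.sub_eq_integral a ha y (hs.out ha hb (Ioo_subset_Icc_self hy)), add_sub_cancel]

theorem ae_eq_zero_of_eq_const [CompleteSpace E] (hf : IsPrimitiveOn f f' s) (hs : s.OrdConnected)
    (c : E) : ∀ᵐ x ∂volume.restrict s, f x = c → f' x = 0 := by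
  filter_upwards [hf.ae_hasDerivAt hs, ae_restrict_of_ae (ae_deriv_eq_zero_of_eq_const f c)]
    with x hx hxc hc
  rw [← hx.deriv, hxc hc]

theorem integrableOn_bilinear_add_and_integral_eq_zero [CompleteSpace E] [CompleteSpace F]
    (B : E →L[ℝ] F →L[ℝ] ℝ) (hs : s.OrdConnected) (hso : IsOpen s)
    (hf : IsPrimitiveOn f f' s) (hg : IsPrimitiveOn g g' s) (hgc : HasCompactSupport g)
    (hgs : tsupport g ⊆ s) :
    IntegrableOn (fun x => B (f x) (g' x) + B (f' x) (g x)) s ∧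
      ∫ x in s, (B (f x) (g' x) + B (f' x) (g x)) = 0 := by
  have support_subset : Function.support (fun x => B (f x) (g x)) ⊆ Function.support g :=
    fun x hx hgx => hx (by simp only [hgx, map_zero])
  have deriv_eq : deriv (fun x => B (f x) (g x)) =ᵐ[volume.restrict s]
      fun x => B (f x) (g' x) + B (f' x) (g x) := by
    filter_upwards [hf.ae_hasDerivAt hs, hg.ae_hasDerivAt hs] with x hfx hgx
    exact (B.hasDerivAt_of_bilinear (fun _ => hfx) fun _ => hgx).deriv
  obtain ⟨integrable, integral_eq⟩ := integrableOn_deriv_and_integral_eq_zero_of_hasCompactSupport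
    hso (fun a ha b hb => absolutelyContinuousOnInterval_bilinear B
      (hf.absolutelyContinuousOnInterval hs ha hb) (hg.absolutelyContinuousOnInterval hs ha hb))
    (hgc.mono support_subset) ((closure_mono support_subset).trans hgs)
  exact ⟨integrable.congr deriv_eq, by rwa [integral_congr_ae deriv_eq] at integral_eq⟩

theorem integral_mul_iteratedDeriv_two_sub_eq_zero {f f' f'' p : ℝ → ℝ} (hs : s.OrdConnected)
    (hso : IsOpen s) (hf : IsPrimitiveOn f f' s) (hf' : IsPrimitiveOn f' f'' s)
    (hp : ContDiff ℝ 2 p) (hpc : HasCompactSupport p) (hps : tsupport p ⊆ s) :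
    ∫ x in s, (f x * iteratedDeriv 2 p x - f'' x * p x) = 0 := by
  have hdp : ContDiff ℝ 1 (deriv p) := hp.deriv'
  have p_primitive : IsPrimitiveOn p (deriv p) s := .of_hasDerivAt hs
    (fun x _ => (hp.differentiable two_ne_zero x).hasDerivAt)
    fun x _ y _ => hdp.continuous.intervalIntegrable x y
  have deriv_p_primitive : IsPrimitiveOn (deriv p) (deriv (deriv p)) s := .of_hasDerivAt hs
    (fun x _ => (hdp.differentiable one_ne_zero x).hasDerivAt)
    fun x _ y _ => hdp.continuous_deriv_one.intervalIntegrable x y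
  have first := integrableOn_bilinear_add_and_integral_eq_zero (.mul ℝ ℝ) hs hso hf
    deriv_p_primitive hpc.deriv (tsupport_deriv_subset.trans hps)
  have second := integrableOn_bilinear_add_and_integral_eq_zero (.mul ℝ ℝ) hs hso hf'
    p_primitive hpc hps
  have difference := integral_sub first.1 second.1
  rw [first.2, second.2, sub_zero] at difference
  rw [← difference, iteratedDeriv_succ, iteratedDeriv_one]
  simp only [ContinuousLinearMap.mul_apply']
  refine integral_congr_ae (Eventually.of_forall fun x => ?_)
  ring

end IsPrimitiveOn

end Calculus

section Lp

variable {α E : Type*} {mα : MeasurableSpace α} {μ : Measure α} {p : ENNReal}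
  [NormedAddCommGroup E]

theorem tendsto_toLp_of_tendstoUniformly [IsFiniteMeasure μ] [Fact (1 ≤ p)] {ι : Type*}
    {l : Filter ι} {F : ι → α → E} {f : α → E} (hF : ∀ i, MemLp (F i) p μ) (hf : MemLp f p μ)
    (h : TendstoUniformly F f l) : Tendsto (fun i => (hF i).toLp) l (𝓝 hf.toLp) := by
  set M : ℝ := (measureUnivNNReal μ : ℝ) ^ p.toReal⁻¹
  rw [Metric.tendsto_nhds]
  intro ε hε
  filter_upwards [Metric.tendstoUniformly_iff.1 h (ε / (M + 1)) (by positivity)] with i hi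
  have ae_bound : ∀ᵐ x ∂μ, ‖((hF i).toLp - hf.toLp : Lp E p μ) x‖ ≤ ε / (M + 1) := by
    rw [← MemLp.toLp_sub]
    filter_upwards [((hF i).sub hf).coeFn_toLp] with x hx
    rw [hx, Pi.sub_apply, ← dist_eq_norm, dist_comm]
    exact (hi x).le
  calc dist (hF i).toLp hf.toLp
      ≤ M * (ε / (M + 1)) := by
        rw [dist_eq_norm]
        exact Lp.norm_le_of_ae_bound (by positivity) ae_bound
    _ < ε := by
        rw [mul_div_assoc', div_lt_iff₀ (by positivity)]
        linarith [mul_add_one ε M, mul_comm M ε]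

variable [NormedSpace ℝ E]

theorem tendstoUniformly_slope {F F' : ℝ → α → E} {t : ℝ}
    (hF : ∀ s x, HasDerivAt (fun s => F s x) (F' s x) s)
    (hF' : TendstoUniformly F' (F' t) (𝓝 t)) :
    TendstoUniformly (fun s => slope F t s) (F' t) (𝓝[≠] t) := by
  rw [Metric.tendstoUniformly_iff] at hF' ⊢
  intro ε hε
  obtain ⟨δ, hδ, deriv_close⟩ := Metric.eventually_nhds_iff_ball.1 (hF' (ε / 2) (half_pos hε))
  filter_upwards [nhdsWithin_le_nhds (Metric.ball_mem_nhds t hδ), self_mem_nhdsWithin]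
    with s hs hst x
  have remainder_le : ‖(F s x - s • F' t x) - (F t x - t • F' t x)‖ ≤ ε / 2 * ‖s - t‖ := by
    refine (convex_ball t δ).norm_image_sub_le_of_norm_hasDerivWithin_le
      (f := fun y => F y x - y • F' t x) (f' := fun y => F' y x - (1 : ℝ) • F' t x)
      (fun y _ => ((hF y x).sub ((hasDerivAt_id y).smul_const _)).hasDerivWithinAt)
      (fun y hy => ?_) (Metric.mem_ball_self hδ) hs
    rw [one_smul, ← dist_eq_norm, dist_comm]
    exact (deriv_close y hy x).le
  have slope_sub : slope F t s x - F' t x =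
      (s - t)⁻¹ • ((F s x - s • F' t x) - (F t x - t • F' t x)) := by
    have inv_smul : (s - t)⁻¹ • (s - t) • F' t x = F' t x :=
      inv_smul_smul₀ (sub_ne_zero.2 hst) _
    rw [slope_def_module, Pi.smul_apply, Pi.sub_apply, sub_sub_sub_comm, ← sub_smul,
      smul_sub _ (F s x - F t x), inv_smul]
  calc dist (F' t x) (slope F t s x)
      = ‖s - t‖⁻¹ * ‖(F s x - s • F' t x) - (F t x - t • F' t x)‖ := by
        rw [dist_comm, dist_eq_norm, slope_sub, norm_smul, norm_inv]
    _ ≤ ‖s - t‖⁻¹ * (ε / 2 * ‖s - t‖) := by gcongr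
    _ = ε / 2 := by
        rw [mul_left_comm, inv_mul_cancel₀ (norm_ne_zero_iff.2 (sub_ne_zero.2 hst)), mul_one]
    _ < ε := half_lt_self hε

theorem hasDerivAt_toLp [IsFiniteMeasure μ] [Fact (1 ≤ p)] {F F' : ℝ → α → E} {t : ℝ}
    (hF : ∀ s x, HasDerivAt (fun s => F s x) (F' s x) s)
    (hF' : TendstoUniformly F' (F' t) (𝓝 t)) (hm : ∀ s, MemLp (F s) p μ)
    (hm' : MemLp (F' t) p μ) : HasDerivAt (fun s => (hm s).toLp) hm'.toLp t := by
  rw [hasDerivAt_iff_tendsto_slope]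
  have memLp_slope : ∀ s, MemLp (slope F t s) p μ := fun s =>
    ((hm s).sub (hm t)).const_smul (s - t)⁻¹
  refine (tendsto_toLp_of_tendstoUniformly memLp_slope hm' (tendstoUniformly_slope hF hF')).congr
    fun s => ?_
  calc (memLp_slope s).toLp
      = (s - t)⁻¹ • ((hm s).toLp - (hm t).toLp) := by
        rw [← MemLp.toLp_sub, ← MemLp.toLp_const_smul]
        rfl
    _ = slope (fun s => (hm s).toLp) t s := by rw [slope_def_module]

theorem ae_nonneg_of_hasDerivAt_of_eq_zero [Fact (1 ≤ p)] {u : ℝ → Lp ℝ p μ} {d : Lp ℝ p μ}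
    {t : ℝ} (hd : HasDerivAt u d t) (hu : ∀ s > t, ∀ᵐ x ∂μ, 0 ≤ u s x) :
    ∀ᵐ x ∂μ, u t x = 0 → 0 ≤ d x := by
  have slope_tendsto : Tendsto (slope u t) (𝓝[>] t) (𝓝 d) :=
    (hasDerivAt_iff_tendsto_slope_left_right.1 hd).2
  obtain ⟨s, hs, ae_tendsto⟩ :=
    (tendstoInMeasure_of_tendsto_Lp slope_tendsto).exists_seq_tendsto_ae'
  have slope_nonneg : ∀ n, ∀ᵐ x ∂μ, t < s n → u t x = 0 → 0 ≤ slope u t (s n) x := by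
    intro n
    by_cases hn : t < s n
    · rw [slope_def_module]
      filter_upwards [Lp.coeFn_smul (s n - t)⁻¹ (u (s n) - u t), Lp.coeFn_sub (u (s n)) (u t),
        hu (s n) hn] with x smul_eq sub_eq nonneg _ zero
      rw [smul_eq, Pi.smul_apply, sub_eq, Pi.sub_apply, zero, sub_zero, smul_eq_mul]
      exact mul_nonneg (inv_nonneg.2 (sub_nonneg.2 hn.le)) nonneg
    · exact Eventually.of_forall fun x h => absurd h hn
  filter_upwards [ae_tendsto, ae_all_iff.2 slope_nonneg] with x hx nonneg zero
  exact ge_of_tendsto hx ((hs.eventually self_mem_nhdsWithin).mono fun n hn => nonneg n hn zero)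

theorem hasCompactSupport_iteratedDeriv {f : ℝ → E} (hc : HasCompactSupport f) (n : ℕ) :
    HasCompactSupport (iteratedDeriv n f) := by
  induction n with
  | zero => rwa [iteratedDeriv_zero]
  | succ n ih => rw [iteratedDeriv_succ]; exact ih.deriv

theorem memLp_iteratedDeriv_of_hasCompactSupport {μ : Measure ℝ} [IsFiniteMeasureOnCompacts μ]
    {f : ℝ → E} {n : ℕ} (hf : ContDiff ℝ n f) (hc : HasCompactSupport f) :
    MemLp (iteratedDeriv n f) p μ :=
  (hf.continuous_iteratedDeriv n le_rfl).memLp_of_hasCompactSupport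
    (hasCompactSupport_iteratedDeriv hc n)

end Lp

section Slice

variable {X Y E : Type*} [TopologicalSpace Y] [MeasurableSpace Y] [OpensMeasurableSpace Y]
  {μ : Measure Y} [IsFiniteMeasure μ] {p : ENNReal} [NormedAddCommGroup E]
  [SecondCountableTopologyEither Y E]

theorem memLp_slice [TopologicalSpace X] {ψ : X × Y → E} (hψ : Continuous ψ)
    (hc : HasCompactSupport ψ) (t : X) : MemLp (fun x => ψ (t, x)) p μ := by
  obtain ⟨C, hC⟩ := hψ.bounded_above_of_compact_support hc
  have continuous_slice : Continuous fun x => ψ (t, x) := by fun_prop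
  exact .of_bound continuous_slice.aestronglyMeasurable C (Eventually.of_forall fun x => hC (t, x))

/-- The curve `t ↦ ψ (t, ·)` in `Lp` given by a compactly supported continuous function `ψ` of two
variables. -/
def sliceLp [TopologicalSpace X] (p : ENNReal) (μ : Measure Y) [IsFiniteMeasure μ] {ψ : X × Y → E}
    (hψ : Continuous ψ) (hc : HasCompactSupport ψ) (t : X) : Lp E p μ :=
  (memLp_slice hψ hc t).toLp

theorem continuous_sliceLp [UniformSpace X] {Y : Type*} [UniformSpace Y] [MeasurableSpace Y]
    [OpensMeasurableSpace Y] {μ : Measure Y} [IsFiniteMeasure μ]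
    [SecondCountableTopologyEither Y E] [Fact (1 ≤ p)] {ψ : X × Y → E}
    (hψ : Continuous ψ) (hc : HasCompactSupport ψ) : Continuous (sliceLp p μ hψ hc) := by
  refine continuous_iff_continuousAt.2 fun t => tendsto_toLp_of_tendstoUniformly _ _ ?_
  exact UniformContinuous₂.tendstoUniformly (hc.uniformContinuous_of_continuous hψ)

theorem tsupport_sliceLp_subset [TopologicalSpace X] [T2Space X] {ψ : X × Y → E}
    (hψ : Continuous ψ) (hc : HasCompactSupport ψ) :
    tsupport (sliceLp p μ hψ hc) ⊆ Prod.fst '' tsupport ψ := by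
  refine closure_minimal (fun t ht => ?_) (hc.image continuous_fst).isClosed
  by_contra hmem
  refine ht ((Lp.eq_zero_iff_ae_eq_zero).2 ((memLp_slice hψ hc t).coeFn_toLp.trans ?_))
  refine Eventually.of_forall fun x => ?_
  exact image_eq_zero_of_notMem_tsupport fun h => hmem ⟨_, h, rfl⟩

theorem hasCompactSupport_sliceLp [TopologicalSpace X] [T2Space X] {ψ : X × Y → E}
    (hψ : Continuous ψ) (hc : HasCompactSupport ψ) : HasCompactSupport (sliceLp p μ hψ hc) :=
  (hc.image continuous_fst).of_isClosed_subset (isClosed_tsupport _)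
    (tsupport_sliceLp_subset hψ hc)

theorem isPrimitiveOn_sliceLp {Y : Type*} [UniformSpace Y] [MeasurableSpace Y]
    [OpensMeasurableSpace Y] {μ : Measure Y} [IsFiniteMeasure μ] [NormedSpace ℝ E]
    [CompleteSpace E] [SecondCountableTopologyEither Y E] [Fact (1 ≤ p)] {ψ ψ' : ℝ × Y → E}
    (hψ : Continuous ψ) (hc : HasCompactSupport ψ) (hψ' : Continuous ψ')
    (hc' : HasCompactSupport ψ') (hd : ∀ t x, HasDerivAt (fun s => ψ (s, x)) (ψ' (t, x)) t)
    {s : Set ℝ} (hs : s.OrdConnected) :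
    IsPrimitiveOn (sliceLp p μ hψ hc) (sliceLp p μ hψ' hc') s :=
  .of_hasDerivAt hs
    (fun _ _ => hasDerivAt_toLp hd (UniformContinuous₂.tendstoUniformly
      (hc'.uniformContinuous_of_continuous hψ')) _ _)
    fun _ _ _ _ => (continuous_sliceLp hψ' hc').intervalIntegrable _ _

theorem inner_sliceLp [TopologicalSpace X] {ψ : X × Y → ℝ} (hψ : Continuous ψ)
    (hc : HasCompactSupport ψ) (v : Lp ℝ 2 μ) (t : X) :
    inner ℝ v (sliceLp 2 μ hψ hc t) = ∫ x, v x * ψ (t, x) ∂μ := by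
  rw [L2.inner_def]
  refine integral_congr_ae ?_
  filter_upwards [(memLp_slice hψ hc t).coeFn_toLp] with x hx
  rw [sliceLp, hx, RCLike.inner_apply', conj_trivial]

theorem integrableOn_inner_of_hasCompactSupport {H : Type*} [NormedAddCommGroup H]
    [InnerProductSpace ℝ H] {r Φ : ℝ → H} {τ : ℝ} (hr : ∀ T > τ, IntegrableOn r (Ioo τ T))
    (hΦ : Continuous Φ) (hc : HasCompactSupport Φ) :
    IntegrableOn (fun t => inner ℝ (r t) (Φ t)) (Ioi τ) := by
  obtain ⟨C, norm_le⟩ := hΦ.bounded_above_of_compact_support hc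
  obtain ⟨S, hS⟩ := hc.isCompact.bddAbove
  have hT : τ < max S τ + 1 := by linarith [le_max_right S τ]
  have integrable : IntegrableOn (fun t => inner ℝ (r t) (Φ t)) (Ioo τ (max S τ + 1)) := by
    refine ((hr _ hT).norm.mul_const C).mono'
      ((hr _ hT).aestronglyMeasurable.inner hΦ.aestronglyMeasurable)
      (Eventually.of_forall fun t => ?_)
    exact (norm_inner_le_norm _ _).trans (by gcongr; exact norm_le t)
  refine integrable.of_forall_sdiff_eq_zero measurableSet_Ioi fun t ht => ?_
  have notMem : t ∉ tsupport Φ := fun h =>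
    ht.2 ⟨ht.1, (hS h).trans_lt (by linarith [le_max_left S τ])⟩
  rw [image_eq_zero_of_notMem_tsupport notMem, inner_zero_right]

end Slice

section Heat

instance isFiniteMeasure_μ01 : IsFiniteMeasure μ01 :=
  inferInstanceAs (IsFiniteMeasure (volume.restrict (Ioo (0 : ℝ) 1)))

theorem intervalIntegrable_coe (w : Hsp) {x y : ℝ} (hx : x ∈ Ioo (0 : ℝ) 1)
    (hy : y ∈ Ioo (0 : ℝ) 1) : IntervalIntegrable w volume x y := by
  have integrable : IntegrableOn w (Ioo 0 1) := (Lp.memLp w).integrable one_le_two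
  exact (integrable.mono_set (ordConnected_Ioo.uIcc_subset hx hy)).intervalIntegrable

variable {b ω : ℝ → ℝ} {τ : ℝ} {u r u' uxx : ℝ → Hsp} {v w : Hsp} {ψ : ℝ × ℝ → ℝ}

theorem InDomainA.exists_isPrimitiveOn (h : InDomainA v w) : ∃ vt g : ℝ → ℝ,
    vt =ᵐ[μ01] v ∧ IsPrimitiveOn vt g (Ioo 0 1) ∧ IsPrimitiveOn g w (Ioo 0 1) := by
  obtain ⟨vt, -, -, -, vt_ae_eq, g, hvt, hg⟩ := h
  have g_primitive : IsPrimitiveOn g w (Ioo 0 1) :=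
    ⟨fun x hx y hy => intervalIntegrable_coe w hx hy, fun x hx y hy => hg y hy x hx⟩
  refine ⟨vt, g, vt_ae_eq, .of_hasDerivAt ordConnected_Ioo hvt fun x hx y hy => ?_, g_primitive⟩
  exact (g_primitive.absolutelyContinuousOnInterval ordConnected_Ioo hx
    hy).continuousOn.intervalIntegrable

theorem InDomainA.ae_eq_zero_of_eq_zero (h : InDomainA v w) : ∀ᵐ x ∂μ01, v x = 0 → w x = 0 := by
  obtain ⟨vt, g, vt_ae_eq, vt_primitive, g_primitive⟩ := h.exists_isPrimitiveOn
  filter_upwards [vt_ae_eq, vt_primitive.ae_eq_zero_of_eq_const ordConnected_Ioo 0,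
    g_primitive.ae_eq_zero_of_eq_const ordConnected_Ioo 0] with x hvt hg hw hv
  exact hw (hg (hvt.trans hv))

theorem InDomainA.integral_mul_iteratedDeriv_two (h : InDomainA v w) {p : ℝ → ℝ}
    (hp : ContDiff ℝ 2 p) (hpc : HasCompactSupport p) (hps : tsupport p ⊆ Ioo 0 1) :
    ∫ x, v x * iteratedDeriv 2 p x ∂μ01 = ∫ x, w x * p x ∂μ01 := by
  obtain ⟨vt, g, vt_ae_eq, vt_primitive, g_primitive⟩ := h.exists_isPrimitiveOn
  have integrable_left : Integrable (fun x => v x * iteratedDeriv 2 p x) μ01 :=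
    (Lp.memLp v).integrable_mul (q := 2) (memLp_iteratedDeriv_of_hasCompactSupport hp hpc)
  have integrable_right : Integrable (fun x => w x * p x) μ01 :=
    (Lp.memLp w).integrable_mul (q := 2) (hp.continuous.memLp_of_hasCompactSupport hpc)
  rw [← sub_eq_zero, ← integral_sub integrable_left integrable_right,
    ← vt_primitive.integral_mul_iteratedDeriv_two_sub_eq_zero ordConnected_Ioo isOpen_Ioo
      g_primitive hp hpc hps]
  refine integral_congr_ae ?_
  filter_upwards [vt_ae_eq] with x hx
  rw [hx]

theorem IsStrongSolutionWith.isPrimitiveOn (h : IsStrongSolutionWith b ω τ u r u' uxx) :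
    IsPrimitiveOn u u' (Ioi τ) := by
  have of_lt : ∀ x ∈ Ioi τ, ∀ y, x < y →
      IntervalIntegrable u' volume x y ∧ u y - u x = ∫ s in x..y, u' s := fun x hx y hxy =>
    ⟨(h.fund x y hx hxy).1, sub_eq_iff_eq_add'.2 ((h.fund x y hx hxy).2 y ⟨hxy.le, le_rfl⟩)⟩
  constructor <;> intro x hx y hy <;> rcases lt_trichotomy x y with hxy | rfl | hxy
  · exact (of_lt x hx y hxy).1
  · exact .refl
  · exact (of_lt y hy x hxy).1.symm
  · exact (of_lt x hx y hxy).2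
  · rw [sub_self, intervalIntegral.integral_same]
  · rw [intervalIntegral.integral_symm, ← (of_lt y hy x hxy).2, neg_sub]

theorem IsStrongSolutionWith.ae_coeFn_sub_eq (h : IsStrongSolutionWith b ω τ u r u' uxx) :
    ∀ᵐ t ∂volume.restrict (Ioi τ), ∀ᵐ x ∂μ01, u' t x - uxx t x = r t x := by
  filter_upwards [h.eq] with t ht
  filter_upwards [Lp.coeFn_add (r t) (uxx t)] with x hx
  rw [ht, hx, Pi.add_apply, add_sub_cancel_right]

theorem heaviside_of_pos {s : ℝ} (hs : 0 < s) : heaviside s = {1} := by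
  rw [heaviside, if_neg hs.not_gt, if_neg hs.ne']

theorem IsStrongSolutionWith.ae_nonneg (h : IsStrongSolutionWith b ω τ u r u' uxx)
    (hb : ∀ t > τ, 0 ≤ b t) (hω : ∀ t > τ, 0 ≤ ω t) (hu : NonnegOn u τ) :
    ∀ᵐ t ∂volume.restrict (Ioi τ), ∀ᵐ x ∂μ01, 0 ≤ r t x := by
  filter_upwards [h.sel, h.dom, h.ae_coeFn_sub_eq, h.isPrimitiveOn.ae_hasDerivAt ordConnected_Ioi,
    ae_restrict_mem measurableSet_Ioi] with t selection domain equation hasDerivAt (ht : τ < t)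
  filter_upwards [selection, hu t ht.le, domain.ae_eq_zero_of_eq_zero, equation,
    ae_nonneg_of_hasDerivAt_of_eq_zero hasDerivAt fun s hs => hu s (ht.trans hs).le]
    with x ⟨η, hη, r_eq⟩ u_nonneg uxx_eq_zero u'_sub_uxx u'_nonneg
  rcases u_nonneg.lt_or_eq with pos | zero
  · rw [heaviside_of_pos pos, mem_singleton_iff] at hη
    rw [r_eq, hη, mul_one]
    exact add_nonneg (hb t ht) (mul_nonneg (hω t ht) u_nonneg)
  · rw [← u'_sub_uxx, uxx_eq_zero zero.symm, sub_zero]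
    exact u'_nonneg zero.symm

theorem hasCompactSupport_slice_snd (hc : HasCompactSupport ψ) (t : ℝ) :
    HasCompactSupport fun x => ψ (t, x) :=
  .intro (hc.image continuous_snd) fun x hx =>
    image_eq_zero_of_notMem_tsupport fun h => hx ⟨(t, x), h, rfl⟩

theorem hasDerivAt_slice_fst (hψ : Differentiable ℝ ψ) (t x : ℝ) :
    HasDerivAt (fun s => ψ (s, x)) (fderiv ℝ ψ (t, x) (1, 0)) t :=
  (hψ (t, x)).hasFDerivAt.comp_hasDerivAt t ((hasDerivAt_id t).prodMk (hasDerivAt_const t x))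

theorem InDomainA.integral_mul_neg_deriv_sub (h : InDomainA v w) (hψ : ContDiff ℝ 2 ψ)
    (hc : HasCompactSupport ψ) {s : Set ℝ} (hψs : tsupport ψ ⊆ s ×ˢ Ioo 0 1) (t : ℝ) :
    ∫ x, v x * (-deriv (fun s => ψ (s, x)) t - iteratedDeriv 2 (fun y => ψ (t, y)) x) ∂μ01 =
      -∫ x, v x * fderiv ℝ ψ (t, x) (1, 0) ∂μ01 - ∫ x, w x * ψ (t, x) ∂μ01 := by
  have slice_contDiff : ContDiff ℝ 2 fun x => ψ (t, x) := by fun_prop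
  have slice_compact : HasCompactSupport fun x => ψ (t, x) := hasCompactSupport_slice_snd hc t
  have slice_tsupport : tsupport (fun x => ψ (t, x)) ⊆ Ioo 0 1 := fun x hx =>
    (hψs (tsupport_comp_subset_preimage ψ (f := fun y => (t, y)) (by fun_prop) hx)).2
  have memLp_time : MemLp (fun x => fderiv ℝ ψ (t, x) (1, 0)) 2 μ01 :=
    memLp_slice (ψ := fun q => fderiv ℝ ψ q (1, 0))
      ((hψ.continuous_fderiv two_ne_zero).clm_apply continuous_const) (hc.fderiv_apply ℝ _) t
  have integrable_time : Integrable (fun x => v x * fderiv ℝ ψ (t, x) (1, 0)) μ01 :=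
    (Lp.memLp v).integrable_mul memLp_time
  have integrable_space : Integrable (fun x => v x * iteratedDeriv 2 (fun y => ψ (t, y)) x) μ01 :=
    (Lp.memLp v).integrable_mul (q := 2)
      (memLp_iteratedDeriv_of_hasCompactSupport slice_contDiff slice_compact)
  rw [← h.integral_mul_iteratedDeriv_two slice_contDiff slice_compact slice_tsupport,
    ← integral_neg, ← integral_sub integrable_time.fun_neg integrable_space]
  refine integral_congr_ae (Eventually.of_forall fun x => ?_)
  simp only [(hasDerivAt_slice_fst (hψ.differentiable two_ne_zero) t x).deriv]
  ring

theorem IsStrongSolutionWith.integral_mul_neg_deriv_sub (h : IsStrongSolutionWith b ω τ u r u' uxx)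
    (hψ : ContDiff ℝ 2 ψ) (hc : HasCompactSupport ψ) (hψs : tsupport ψ ⊆ Ioi τ ×ˢ Ioo 0 1) :
    ∫ t in Ioi τ, ∫ x, u t x *
        (-deriv (fun s => ψ (s, x)) t - iteratedDeriv 2 (fun y => ψ (t, y)) x) ∂μ01 =
      ∫ t in Ioi τ, ∫ x, r t x * ψ (t, x) ∂μ01 := by
  have hψ' : Continuous fun q => fderiv ℝ ψ q (1, 0) :=
    (hψ.continuous_fderiv two_ne_zero).clm_apply continuous_const
  have hc' : HasCompactSupport fun q => fderiv ℝ ψ q (1, 0) := hc.fderiv_apply ℝ _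
  set Φ : ℝ → Hsp := sliceLp 2 μ01 hψ.continuous hc
  set Φ' : ℝ → Hsp := sliceLp 2 μ01 hψ' hc'
  have Φ_primitive : IsPrimitiveOn Φ Φ' (Ioi τ) := isPrimitiveOn_sliceLp hψ.continuous hc hψ' hc'
    (hasDerivAt_slice_fst (hψ.differentiable two_ne_zero)) ordConnected_Ioi
  have Φ_tsupport : tsupport Φ ⊆ Ioi τ := (tsupport_sliceLp_subset hψ.continuous hc).trans
    (image_subset_iff.2 fun q hq => (hψs hq).1)
  obtain ⟨by_parts_integrable, by_parts⟩ :=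
    h.isPrimitiveOn.integrableOn_bilinear_add_and_integral_eq_zero
    (innerSL ℝ) ordConnected_Ioi isOpen_Ioi Φ_primitive
    (hasCompactSupport_sliceLp hψ.continuous hc) Φ_tsupport
  have source_integrable : IntegrableOn (fun t => inner ℝ (r t) (Φ t)) (Ioi τ) :=
    integrableOn_inner_of_hasCompactSupport (fun T hT => (h.rmem T hT).integrable one_le_two)
      (continuous_sliceLp hψ.continuous hc) (hasCompactSupport_sliceLp hψ.continuous hc)
  calc _ = ∫ t in Ioi τ, (inner ℝ (r t) (Φ t) -
        (innerSL ℝ (u t) (Φ' t) + innerSL ℝ (u' t) (Φ t))) := by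
        refine integral_congr_ae ?_
        filter_upwards [h.dom, h.eq] with t domain equation
        rw [domain.integral_mul_neg_deriv_sub hψ hc hψs, ← inner_sliceLp hψ' hc',
          ← inner_sliceLp hψ.continuous hc, equation, map_add, add_apply]
        simp only [innerSL_apply_apply]
        ring
    _ = ∫ t in Ioi τ, inner ℝ (r t) (Φ t) := by
        rw [integral_sub source_integrable by_parts_integrable, by_parts, sub_zero]
    _ = _ := by simp only [Φ, inner_sliceLp]

end Heat

theorem statement0_general {b ω : ℝ → ℝ} {τ : ℝ} {u r u' uxx : ℝ → Hsp}
    (hb : ∀ t > τ, 0 ≤ b t) (hω : ∀ t > τ, 0 ≤ ω t)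
    (hsol : IsStrongSolutionWith b ω τ u r u' uxx) (hnneg : NonnegOn u τ) :
    (∀ᵐ t ∂(volume.restrict (Ioi τ)), ∀ᵐ x ∂μ01, 0 ≤ u' t x - uxx t x) ∧
    (∀ φ : ℝ → ℝ → ℝ,
      ContDiff ℝ 2 (fun p : ℝ × ℝ => φ p.1 p.2) →
      HasCompactSupport (fun p : ℝ × ℝ => φ p.1 p.2) →
      tsupport (fun p : ℝ × ℝ => φ p.1 p.2) ⊆ Ioi τ ×ˢ Ioo (0:ℝ) 1 →
      (∀ t x, 0 ≤ φ t x) →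
      0 ≤ ∫ t in Ioi τ, ∫ x in Ioo (0:ℝ) 1,
            u t x * (-(deriv (fun s => φ s x) t) - iteratedDeriv 2 (fun y => φ t y) x)) := by
  have r_nonneg := hsol.ae_nonneg hb hω hnneg
  refine ⟨?_, fun φ hφ hc hφs φ_nonneg => ?_⟩
  · filter_upwards [r_nonneg, hsol.ae_coeFn_sub_eq] with t nonneg equation
    filter_upwards [nonneg, equation] with x hx hxeq
    rwa [hxeq]
  · refine (integral_nonneg_of_ae ?_).trans_eq (hsol.integral_mul_neg_deriv_sub hφ hc hφs).symm
    filter_upwards [r_nonneg] with t nonneg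
    refine integral_nonneg_of_ae ?_
    filter_upwards [nonneg] with x hx
    exact mul_nonneg hx (φ_nonneg t x)

/-- if `u` is a non-negative strong solution of the inclusion, then
`∂u/∂t − ∂²u/∂x² ≥ 0` for a.a. `t > τ` and a.a. `x ∈ (0,1)`, and consequently
`∂u/∂t − ∂²u/∂x² ≥ 0` in the sense of distributions on `(τ,∞)×(0,1)`. -/
theorem statement0
    (b ω : ℝ → ℝ) (b0 b1 ω0 ω1 τ : ℝ) (hC : Cond1 b ω b0 b1 ω0 ω1)
    (uτ : Hsp) (u r u' uxx : ℝ → Hsp)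
    (hsol : IsStrongSolutionWith b ω τ u r u' uxx)
    (hinit : u τ = uτ)
    (hnneg : NonnegOn u τ) :
    (∀ᵐ t ∂(volume.restrict (Ioi τ)), ∀ᵐ x ∂μ01, 0 ≤ u' t x - uxx t x) ∧
    (∀ φ : ℝ → ℝ → ℝ,
      ContDiff ℝ (⊤ : ℕ∞) (fun p : ℝ × ℝ => φ p.1 p.2) →
      HasCompactSupport (fun p : ℝ × ℝ => φ p.1 p.2) →
      tsupport (fun p : ℝ × ℝ => φ p.1 p.2) ⊆ Ioi τ ×ˢ Ioo (0:ℝ) 1 →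
      (∀ t x, 0 ≤ φ t x) →
      0 ≤ ∫ t in Ioi τ, ∫ x in Ioo (0:ℝ) 1,
            u t x * (-(deriv (fun s => φ s x) t) - iteratedDeriv 2 (fun y => φ t y) x)) := by
  obtain ⟨ae_nonneg, distrib_nonneg⟩ := statement0_general
    (fun t _ => hC.b0pos.le.trans (hC.blb t)) (fun t _ => hC.ω0nonneg.trans (hC.ωlb t)) hsol hnneg
  exact ⟨ae_nonneg, fun φ hφ => distrib_nonneg φ (contDiff_infty.1 hφ 2)⟩

end
end

section
/- Assume condition (Cond1). Let u_τ ∈ H satisfy u_τ ≥ 0 but u_τ ≢ 0, and let u be a non-negative strong solution to problem (Incl) with initial condition u_τ at time τ. Then u is the unique solution in the class of non-negative solutions, and u(t) is positive (i.e. u(t,x) > 0 for all x ∈ (0,1)) for every t > τ. -/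
open MeasureTheory Set

noncomputable section

/-- A strong solution of the inclusion on `[τ,∞)`. -/
def IsStrongSolution (b ω : ℝ → ℝ) (τ : ℝ) (u : ℝ → Hsp) : Prop :=
  ∃ r u' uxx, IsStrongSolutionWith b ω τ u r u' uxx

/-- `v` is positive: it has a continuous representative on `[0,1]`
which is strictly positive on `(0,1)`. -/
def IsPositive (v : Hsp) : Prop :=
  ∃ vt : ℝ → ℝ, ContinuousOn vt (Icc 0 1) ∧ (∀ᵐ x ∂μ01, vt x = v x) ∧
    ∀ x ∈ Ioo (0:ℝ) 1, 0 < vt x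

/-!
At almost every time a non-negative solution has `u' ≥ 0` and `uxx = 0` almost everywhere on its
zero set, so the source `r = u' - uxx` is non-negative there; where `u > 0` the source is
`b + ω u ≥ 0`. The solution is therefore a supersolution of the heat equation, and since the
Dirichlet heat kernel is strictly positive, Duhamel's formula gives `u t x > 0` for `t > τ`. Hence
the Heaviside multifunction takes only the value `1` along non-negative solutions, all of which thus
solve the same linear equation `u' = uxx + ω u + b`, and uniqueness follows by integrating the
equation for each sine coefficient.

The heat kernel is a difference of two values of the theta function `∑ q ^ (j ^ 2) cos (j α)`, and
its positivity is read off from the Jacobi triple product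
`∏ (1 - q ^ (2k)) (1 + 2 q ^ (2k-1) cos α + q ^ (4k-2))`, each of whose factors is increasing
in `cos α`.
-/

open Filter Topology

section Theta

/-- The coefficient of `z ^ j` in the Laurent polynomial
`∏ k < N, (1 + z * q ^ (2 * k + 1)) * (1 + z⁻¹ * q ^ (2 * k + 1))`. -/
def finiteThetaCoeff (q : ℝ) : ℕ → ℤ → ℝ
  | 0, j => if j = 0 then 1 else 0
  | N + 1, j => (1 + q ^ (4 * N + 2)) * finiteThetaCoeff q N j
      + q ^ (2 * N + 1) * (finiteThetaCoeff q N (j - 1) + finiteThetaCoeff q N (j + 1))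

/-- The theta function `∑ q ^ (j ^ 2) * cos (j * α)` with nome `q`, the sum being over `j : ℤ`. -/
def cosTheta (q α : ℝ) : ℝ := ∑' j : ℤ, q ^ (j ^ 2) * Real.cos (j * α)

/-- The number `‖1 + q ^ (2 * k + 1) * exp (i * α)‖ ^ 2 - 1`, where `c = cos α`: one plus it is the
`k`-th factor of Jacobi's triple product. -/
def tripleProductTerm (q c : ℝ) (k : ℕ) : ℝ := 2 * q ^ (2 * k + 1) * c + q ^ (4 * k + 2)

variable {q : ℝ}

lemma finiteThetaCoeff_nonneg (hq : 0 ≤ q) (N : ℕ) (j : ℤ) : 0 ≤ finiteThetaCoeff q N j := by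
  induction N generalizing j with
  | zero => rw [finiteThetaCoeff]; split_ifs <;> norm_num
  | succ N ih =>
    have := ih j
    have := ih (j - 1)
    have := ih (j + 1)
    rw [finiteThetaCoeff]
    positivity

lemma finiteThetaCoeff_zero_pos (hq : 0 ≤ q) (N : ℕ) : 0 < finiteThetaCoeff q N 0 := by
  induction N with
  | zero => simp [finiteThetaCoeff]
  | succ N ih =>
    have := finiteThetaCoeff_nonneg hq N (0 - 1)
    have := finiteThetaCoeff_nonneg hq N (0 + 1)
    rw [finiteThetaCoeff]
    positivity

lemma finiteThetaCoeff_neg (q : ℝ) (N : ℕ) (j : ℤ) :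
    finiteThetaCoeff q N (-j) = finiteThetaCoeff q N j := by
  induction N generalizing j with
  | zero => simp [finiteThetaCoeff]
  | succ N ih =>
    simp only [finiteThetaCoeff, ih j, show -j - 1 = -(j + 1) by ring, ih (j + 1),
      show -j + 1 = -(j - 1) by ring, ih (j - 1)]
    ring

lemma summable_finiteThetaCoeff (q : ℝ) (N : ℕ) : Summable (finiteThetaCoeff q N) := by
  induction N with
  | zero => exact (hasSum_ite_eq (0 : ℤ) (1 : ℝ)).summable
  | succ N ih =>
    have hpred : Summable fun j : ℤ ↦ finiteThetaCoeff q N (j - 1) :=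
      (Equiv.subRight (1 : ℤ)).summable_iff.2 ih
    have hsucc : Summable fun j : ℤ ↦ finiteThetaCoeff q N (j + 1) :=
      (Equiv.addRight (1 : ℤ)).summable_iff.2 ih
    exact (ih.mul_left _).add ((hpred.add hsucc).mul_left _)

lemma summable_finiteThetaCoeff_mul_cos (hq : 0 ≤ q) (N : ℕ) (φ : ℤ → ℝ) :
    Summable fun j ↦ finiteThetaCoeff q N j * Real.cos (φ j) := by
  refine (summable_finiteThetaCoeff q N).of_norm_bounded fun j ↦ ?_
  rw [norm_mul, Real.norm_of_nonneg (finiteThetaCoeff_nonneg hq N j)]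
  exact mul_le_of_le_one_right (finiteThetaCoeff_nonneg hq N j) (Real.abs_cos_le_one _)

/-- Solving this two-term recursion in `j` gives the finite form of Jacobi's triple product. -/
lemma finiteThetaCoeff_succ_right (hq : q ≠ 0) (N : ℕ) (j : ℤ) :
    (1 - q ^ 2 * q ^ (2 * N) * q ^ (2 * j)) * finiteThetaCoeff q N (j + 1)
      = q * (q ^ (2 * j) - q ^ (2 * N)) * finiteThetaCoeff q N j := by
  induction N generalizing j with
  | zero =>
    rcases eq_or_ne j 0 with rfl | hj
    · simp [finiteThetaCoeff]
    · rcases eq_or_ne j (-1) with rfl | hj'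
      · simp [finiteThetaCoeff, hq]
      · simp [finiteThetaCoeff, hj, show j + 1 ≠ 0 by lia]
  | succ N ih =>
    have hpred := ih (j - 1)
    have hsucc := ih (j + 1)
    have hzpow_pred : q ^ (2 * (j - 1)) = q ^ (2 * j) / q ^ 2 := by
      rw [mul_sub, zpow_sub₀ hq]; rfl
    have hzpow_succ : q ^ (2 * (j + 1)) = q ^ (2 * j) * q ^ 2 := by
      rw [mul_add, zpow_add₀ hq]; rfl
    rw [hzpow_pred, sub_add_cancel] at hpred
    rw [hzpow_succ] at hsucc
    field_simp at hpred
    simp only [finiteThetaCoeff, add_sub_cancel_right]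
    linear_combination (1 + q ^ (4 * N + 4)) * ih j + q ^ (2 * N + 2) * hpred
      + q ^ (2 * N + 1) * hsucc

lemma finiteThetaCoeff_succ_le (hq0 : 0 < q) (hq1 : q < 1) (N j : ℕ) :
    finiteThetaCoeff q N (j + 1) ≤ q ^ (2 * j + 1) * finiteThetaCoeff q N j := by
  have hrec := finiteThetaCoeff_succ_right hq0.ne' N j
  have hzpow : q ^ (2 * (j : ℤ)) = q ^ (2 * j) := by exact_mod_cast zpow_natCast q (2 * j)
  rw [hzpow] at hrec
  have hlt : q ^ 2 * q ^ (2 * N) * q ^ (2 * j) < 1 := by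
    rw [← pow_add, ← pow_add]
    exact pow_lt_one₀ hq0.le hq1 (by lia)
  refine le_of_mul_le_mul_left ?_ (sub_pos.2 hlt)
  have hle : q * q ^ (2 * N) * (q ^ 2 * (q ^ (2 * j)) ^ 2) ≤ q * q ^ (2 * N) := by
    refine mul_le_of_le_one_right (by positivity) ?_
    rw [← pow_mul, ← pow_add]
    exact pow_le_one₀ hq0.le hq1.le
  rw [hrec, ← mul_assoc, pow_succ q (2 * j)]
  exact mul_le_mul_of_nonneg_right (by linarith) (finiteThetaCoeff_nonneg hq0.le N j)

lemma finiteThetaCoeff_le (hq0 : 0 < q) (hq1 : q < 1) (N : ℕ) (j : ℤ) :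
    finiteThetaCoeff q N j ≤ q ^ (j ^ 2) * finiteThetaCoeff q N 0 := by
  have hnat (n : ℕ) : finiteThetaCoeff q N n ≤ q ^ ((n : ℤ) ^ 2) * finiteThetaCoeff q N 0 := by
    induction n with
    | zero => simp
    | succ n ih =>
      push_cast
      calc finiteThetaCoeff q N (n + 1)
          ≤ q ^ (2 * n + 1) * finiteThetaCoeff q N n := finiteThetaCoeff_succ_le hq0 hq1 N n
        _ ≤ q ^ (2 * n + 1) * (q ^ ((n : ℤ) ^ 2) * finiteThetaCoeff q N 0) := by gcongr
        _ = q ^ (((n : ℤ) + 1) ^ 2) * finiteThetaCoeff q N 0 := by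
          rw [← mul_assoc, ← zpow_natCast q (2 * n + 1), ← zpow_add₀ hq0.ne']
          push_cast
          ring_nf
  obtain ⟨n, rfl | rfl⟩ := j.eq_nat_or_neg
  · exact hnat n
  · rw [finiteThetaCoeff_neg, neg_sq]
    exact hnat n

lemma tendsto_finiteThetaCoeff_div (hq0 : 0 < q) (hq1 : q < 1) (j : ℤ) :
    Tendsto (fun N ↦ finiteThetaCoeff q N j / finiteThetaCoeff q N 0) atTop (𝓝 (q ^ (j ^ 2))) := by
  have hpow : Tendsto (fun N : ℕ ↦ q ^ (2 * N)) atTop (𝓝 0) := by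
    simpa only [pow_mul] using
      tendsto_pow_atTop_nhds_zero_of_lt_one (sq_nonneg q) (pow_lt_one₀ hq0.le hq1 two_ne_zero)
  have hnat (n : ℕ) : Tendsto (fun N ↦ finiteThetaCoeff q N n / finiteThetaCoeff q N 0) atTop
      (𝓝 (q ^ ((n : ℤ) ^ 2))) := by
    induction n with
    | zero => simp [(finiteThetaCoeff_zero_pos hq0.le _).ne']
    | succ n ih =>
      have hratio : Tendsto (fun N : ℕ ↦ q * (q ^ (2 * (n : ℤ)) - q ^ (2 * N))
          / (1 - q ^ 2 * q ^ (2 * N) * q ^ (2 * (n : ℤ)))) atTop (𝓝 (q ^ (2 * (n : ℤ) + 1))) := by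
        convert! ((hpow.const_sub (q ^ (2 * (n : ℤ)))).const_mul q).div
          (((hpow.const_mul (q ^ 2)).mul_const (q ^ (2 * (n : ℤ)))).const_sub 1) (by simp) using 2
        rw [zpow_add₀ hq0.ne']
        simp [mul_comm]
      convert hratio.mul ih using 2 with N
      · have hlt : q ^ 2 * q ^ (2 * N) * q ^ (2 * (n : ℤ)) < 1 := by
          rw [show (2 * (n : ℤ)) = (2 * n : ℕ) by norm_cast, zpow_natCast, ← pow_add, ← pow_add]
          exact pow_lt_one₀ hq0.le hq1 (by lia)
        have hne := (sub_pos.2 hlt).ne'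
        have hne0 := (finiteThetaCoeff_zero_pos hq0.le N).ne'
        rw [div_mul_div_comm, div_eq_div_iff hne0 (mul_ne_zero hne hne0),
          ← finiteThetaCoeff_succ_right hq0.ne']
        push_cast
        ring
      · rw [← zpow_add₀ hq0.ne']
        push_cast
        ring_nf
  obtain ⟨n, rfl | rfl⟩ := j.eq_nat_or_neg
  · exact hnat n
  · simpa only [finiteThetaCoeff_neg, neg_sq] using hnat n

lemma hasSum_finiteThetaCoeff_mul_cos (hq : 0 ≤ q) (N : ℕ) (α : ℝ) :
    HasSum (fun j : ℤ ↦ finiteThetaCoeff q N j * Real.cos (j * α))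
      (∏ k ∈ Finset.range N, (1 + tripleProductTerm q (Real.cos α) k)) := by
  induction N with
  | zero =>
    rw [Finset.prod_range_zero]
    convert hasSum_ite_eq (0 : ℤ) (1 : ℝ) using 2 with j
    rcases eq_or_ne j 0 with rfl | hj <;> simp [finiteThetaCoeff, *]
  | succ N ih =>
    have hright := (summable_finiteThetaCoeff_mul_cos hq N fun j ↦ (j + 1) * α).hasSum
    have hleft := (summable_finiteThetaCoeff_mul_cos hq N fun j ↦ (j - 1) * α).hasSum
    have hadd := (hright.add hleft).unique <| (ih.mul_left (2 * Real.cos α)).congr_fun fun j ↦ by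
      rw [add_one_mul, sub_one_mul, Real.cos_add, Real.cos_sub]
      ring
    have hpred : HasSum (fun j : ℤ ↦ finiteThetaCoeff q N (j - 1) * Real.cos (j * α)) _ :=
      (Equiv.addRight (1 : ℤ)).hasSum_iff.1 <| hright.congr_fun fun j ↦ by simp
    have hsucc : HasSum (fun j : ℤ ↦ finiteThetaCoeff q N (j + 1) * Real.cos (j * α)) _ :=
      (Equiv.subRight (1 : ℤ)).hasSum_iff.1 <| hleft.congr_fun fun j ↦ by simp
    rw [Finset.prod_range_succ]
    convert! (ih.mul_left (1 + q ^ (4 * N + 2))).add ((hpred.add hsucc).mul_left (q ^ (2 * N + 1)))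
      using 1
    · ext j
      rw [finiteThetaCoeff]
      ring
    · rw [hadd, tripleProductTerm]
      ring

lemma summable_zpow_sq (hq0 : 0 < q) (hq1 : q < 1) : Summable fun j : ℤ ↦ q ^ (j ^ 2) := by
  have hnat : Summable fun n : ℕ ↦ q ^ ((n : ℤ) ^ 2) := by
    refine (summable_geometric_of_lt_one hq0.le hq1).of_nonneg_of_le (fun n ↦ by positivity)
      fun n ↦ ?_
    exact_mod_cast pow_le_pow_of_le_one hq0.le hq1.le (Nat.le_self_pow two_ne_zero n)
  exact Summable.of_nat_of_neg (f := fun j : ℤ ↦ q ^ (j ^ 2)) hnat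
    (by simpa only [neg_sq] using hnat)

lemma summable_zpow_sq_mul_cos (hq0 : 0 < q) (hq1 : q < 1) (α : ℝ) :
    Summable fun j : ℤ ↦ q ^ (j ^ 2) * Real.cos (j * α) := by
  refine (summable_zpow_sq hq0 hq1).of_norm_bounded fun j ↦ ?_
  rw [norm_mul, Real.norm_of_nonneg (by positivity)]
  exact mul_le_of_le_one_right (by positivity) (Real.abs_cos_le_one _)

lemma tendsto_prod_div_finiteThetaCoeff (hq0 : 0 < q) (hq1 : q < 1) (α : ℝ) :
    Tendsto (fun N ↦ (∏ k ∈ Finset.range N, (1 + tripleProductTerm q (Real.cos α) k))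
      / finiteThetaCoeff q N 0) atTop (𝓝 (cosTheta q α)) := by
  have hsum (N : ℕ) := ((hasSum_finiteThetaCoeff_mul_cos hq0.le N α).div_const
    (finiteThetaCoeff q N 0)).tsum_eq
  simp only [← hsum, mul_div_right_comm]
  refine tendsto_tsum_of_dominated_convergence (summable_zpow_sq hq0 hq1)
    (fun j ↦ (tendsto_finiteThetaCoeff_div hq0 hq1 j).mul_const _) (.of_forall fun N j ↦ ?_)
  have hpos := finiteThetaCoeff_zero_pos hq0.le N
  have hratio : 0 ≤ finiteThetaCoeff q N j / finiteThetaCoeff q N 0 :=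
    div_nonneg (finiteThetaCoeff_nonneg hq0.le N j) hpos.le
  rw [norm_mul, Real.norm_of_nonneg hratio]
  exact (mul_le_of_le_one_right hratio (Real.abs_cos_le_one _)).trans
    ((div_le_iff₀ hpos).2 (finiteThetaCoeff_le hq0 hq1 N j))

lemma one_add_tripleProductTerm_pos (hq0 : 0 ≤ q) (hq1 : q < 1) {c : ℝ} (hc : -1 ≤ c) (k : ℕ) :
    0 < 1 + tripleProductTerm q c k := by
  have hx0 : 0 ≤ q ^ (2 * k + 1) := by positivity
  have hx1 : q ^ (2 * k + 1) < 1 := pow_lt_one₀ hq0 hq1 (by lia)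
  have hsq : q ^ (4 * k + 2) = (q ^ (2 * k + 1)) ^ 2 := by ring
  rw [tripleProductTerm, hsq]
  nlinarith [mul_le_mul_of_nonneg_left hc hx0, sq_pos_of_pos (sub_pos.2 hx1)]

lemma summable_tripleProductTerm (hq0 : 0 ≤ q) (hq1 : q < 1) (c : ℝ) :
    Summable (tripleProductTerm q c) := by
  have hgeom := summable_geometric_of_lt_one hq0 hq1
  have hodd : Summable fun k : ℕ ↦ q ^ (2 * k + 1) :=
    hgeom.comp_injective (i := fun k ↦ 2 * k + 1) fun _ _ h ↦ by simpa using h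
  have heven : Summable fun k : ℕ ↦ q ^ (4 * k + 2) :=
    hgeom.comp_injective (i := fun k ↦ 4 * k + 2) fun _ _ h ↦ by simpa using h
  exact ((hodd.mul_left 2).mul_right c).add heven

lemma summable_log_one_add_tripleProductTerm (hq0 : 0 ≤ q) (hq1 : q < 1) (c : ℝ) :
    Summable fun k ↦ Real.log (1 + tripleProductTerm q c k) :=
  Real.summable_log_one_add_of_summable (summable_tripleProductTerm hq0 hq1 c)

lemma exp_tsum_log_one_add_tripleProductTerm (hq0 : 0 ≤ q) (hq1 : q < 1) {c : ℝ} (hc : -1 ≤ c) :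
    Real.exp (∑' k, Real.log (1 + tripleProductTerm q c k))
      = ∏' k, (1 + tripleProductTerm q c k) :=
  Real.rexp_tsum_eq_tprod (one_add_tripleProductTerm_pos hq0 hq1 hc)
    (summable_log_one_add_tripleProductTerm hq0 hq1 c)

lemma tprod_one_add_tripleProductTerm_lt (hq0 : 0 < q) (hq1 : q < 1) {c d : ℝ} (hc : -1 ≤ c)
    (hcd : c < d) :
    ∏' k, (1 + tripleProductTerm q c k) < ∏' k, (1 + tripleProductTerm q d k) := by
  rw [← exp_tsum_log_one_add_tripleProductTerm hq0.le hq1 hc,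
    ← exp_tsum_log_one_add_tripleProductTerm hq0.le hq1 (hc.trans hcd.le), Real.exp_lt_exp]
  have hterm (k : ℕ) : Real.log (1 + tripleProductTerm q c k)
      < Real.log (1 + tripleProductTerm q d k) := by
    refine Real.log_lt_log (one_add_tripleProductTerm_pos hq0.le hq1 hc k) ?_
    unfold tripleProductTerm
    gcongr
  exact (summable_log_one_add_tripleProductTerm hq0.le hq1 c).tsum_lt_tsum (i := 0)
    (fun k ↦ (hterm k).le) (hterm 0) (summable_log_one_add_tripleProductTerm hq0.le hq1 d)

lemma cosTheta_zero_pos (hq0 : 0 < q) (hq1 : q < 1) : 0 < cosTheta q 0 :=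
  (summable_zpow_sq_mul_cos hq0 hq1 0).tsum_pos (fun j ↦ by simpa using by positivity) 0 (by simp)

/-- Up to the value of `C`, which is `∏' k, (1 - q ^ (2 * k + 2))⁻¹`, this is Jacobi's triple
product identity. -/
lemma exists_tprod_eq_mul_cosTheta (hq0 : 0 < q) (hq1 : q < 1) :
    ∃ C > 0, ∀ α, ∏' k, (1 + tripleProductTerm q (Real.cos α) k) = C * cosTheta q α := by
  have hprod (α : ℝ) := (Real.multipliable_one_add_of_summable
    (summable_tripleProductTerm hq0.le hq1 (Real.cos α))).tendsto_prod_tprod_nat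
  have hdiv := tendsto_prod_div_finiteThetaCoeff hq0 hq1
  have hθ := cosTheta_zero_pos hq0 hq1
  refine ⟨(∏' k, (1 + tripleProductTerm q (Real.cos 0) k)) / cosTheta q 0, div_pos ?_ hθ,
    fun α ↦ ?_⟩
  · rw [← exp_tsum_log_one_add_tripleProductTerm hq0.le hq1 (Real.neg_one_le_cos 0)]
    exact Real.exp_pos _
  · refine tendsto_nhds_unique (hprod α)
      ((((hprod 0).div (hdiv 0) hθ.ne').mul (hdiv α)).congr fun N ↦ ?_)
    have hcoeff := (finiteThetaCoeff_zero_pos hq0.le N).ne'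
    have hpos : ∏ k ∈ Finset.range N, (1 + tripleProductTerm q (Real.cos 0) k) ≠ 0 :=
      (Finset.prod_pos fun k _ ↦
        one_add_tripleProductTerm_pos hq0.le hq1 (Real.neg_one_le_cos 0) k).ne'
    simp only [Pi.div_apply]
    field_simp

lemma cosTheta_lt_cosTheta (hq0 : 0 < q) (hq1 : q < 1) {α β : ℝ} (h : Real.cos β < Real.cos α) :
    cosTheta q β < cosTheta q α := by
  obtain ⟨C, hC, hprod⟩ := exists_tprod_eq_mul_cosTheta hq0 hq1
  refine lt_of_mul_lt_mul_left ?_ hC.le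
  rw [← hprod, ← hprod]
  exact tprod_one_add_tripleProductTerm_lt hq0 hq1 (Real.neg_one_le_cos β) h

end Theta

section SineSeries

lemma integral_μ01 {E : Type*} [NormedAddCommGroup E] [NormedSpace ℝ E] (f : ℝ → E) :
    ∫ x, f x ∂μ01 = ∫ x in (0 : ℝ)..1, f x := by
  rw [intervalIntegral.integral_of_le zero_le_one, integral_Ioc_eq_integral_Ioo, μ01]

lemma ae_mem_Ioo_μ01 : ∀ᵐ x ∂μ01, x ∈ Ioo (0 : ℝ) 1 := ae_restrict_mem measurableSet_Ioo

instance : IsProbabilityMeasure μ01 := ⟨by simp [μ01]⟩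

lemma integrable_Hsp (v : Hsp) : Integrable v μ01 := (Lp.memLp v).integrable one_le_two

lemma intervalIntegrable_Hsp (v : Hsp) : IntervalIntegrable v volume 0 1 :=
  (intervalIntegrable_iff_integrableOn_Ioo_of_le zero_le_one).2 (integrable_Hsp v)

/-- The Dirichlet eigenfunctions of `-∂²/∂x²` on `(0,1)`. They are indexed by `ℤ`, so each of them
occurs for `n` and, with the opposite sign, for `-n`; since `∫ sin² = 1/2`, this makes
`∑ n : ℤ, sineCoeff n v * sineMode n x` the expansion of `v`, without normalising constants. -/
def sineMode (n : ℤ) (x : ℝ) : ℝ := Real.sin (n * Real.pi * x)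

lemma continuous_sineMode (n : ℤ) : Continuous (sineMode n) := by unfold sineMode; fun_prop

lemma abs_sineMode_le_one (n : ℤ) (x : ℝ) : |sineMode n x| ≤ 1 := Real.abs_sin_le_one _

lemma memLp_sineMode (n : ℤ) : MemLp (sineMode n) 2 μ01 :=
  .of_bound (continuous_sineMode n).aestronglyMeasurable 1 (.of_forall (abs_sineMode_le_one n))

/-- The sine coefficient `v ↦ ∫ sin (n π x) v(x) dx`, as a continuous functional on `L²(0,1)`. -/
def sineCoeff (n : ℤ) : Hsp →L[ℝ] ℝ := innerSL ℝ ((memLp_sineMode n).toLp _)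

lemma sineCoeff_apply (n : ℤ) (v : Hsp) : sineCoeff n v = ∫ x, sineMode n x * v x ∂μ01 := by
  rw [sineCoeff, innerSL_apply_apply, L2.inner_def]
  refine integral_congr_ae ?_
  filter_upwards [(memLp_sineMode n).coeFn_toLp] with x hx
  rw [hx, RCLike.inner_apply, conj_trivial, mul_comm]

/-- The function `∑ n : ℤ, a n * sin (n π x)`. -/
def sineSeries (a : ℤ → ℝ) (x : ℝ) : ℝ := ∑' n, a n * sineMode n x

lemma norm_mul_sineMode_le (a : ℤ → ℝ) (n : ℤ) (x : ℝ) : ‖a n * sineMode n x‖ ≤ |a n| := by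
  rw [norm_mul]
  exact mul_le_of_le_one_right (norm_nonneg _) (abs_sineMode_le_one n x)

lemma continuous_sineSeries {a : ℤ → ℝ} (ha : Summable a) : Continuous (sineSeries a) :=
  continuous_tsum (fun n ↦ (continuous_sineMode n).const_mul _) ha.abs (norm_mul_sineMode_le a)

lemma norm_sineSeries_le {a : ℤ → ℝ} (ha : Summable a) (x : ℝ) :
    ‖sineSeries a x‖ ≤ ∑' n, |a n| :=
  tsum_of_norm_bounded ha.abs.hasSum (norm_mul_sineMode_le a · x)

lemma integrable_sineSeries_mul {a : ℤ → ℝ} (ha : Summable a) (v : Hsp) :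
    Integrable (fun x ↦ sineSeries a x * v x) μ01 :=
  (integrable_Hsp v).bdd_mul (continuous_sineSeries ha).aestronglyMeasurable
    (.of_forall (norm_sineSeries_le ha))

lemma hasSum_mul_sineCoeff {a : ℤ → ℝ} (ha : Summable a) (v : Hsp) :
    HasSum (fun n ↦ a n * sineCoeff n v) (∫ x, sineSeries a x * v x ∂μ01) := by
  have hsum := hasSum_integral_of_dominated_convergence (μ := μ01)
    (F := fun n x ↦ a n * sineMode n x * v x) (f := fun x ↦ sineSeries a x * v x)
    (fun n x ↦ |a n| * ‖v x‖)
    (fun n ↦ ((continuous_sineMode n).const_mul _).aestronglyMeasurable.mul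
      (integrable_Hsp v).aestronglyMeasurable)
    (fun n ↦ .of_forall fun x ↦ by
      rw [norm_mul]
      exact mul_le_mul_of_nonneg_right (norm_mul_sineMode_le a n x) (norm_nonneg _))
    (.of_forall fun x ↦ ha.abs.mul_right _)
    (by simpa only [tsum_mul_right] using (integrable_Hsp v).norm.const_mul _)
    (.of_forall fun x ↦ (ha.abs.of_norm_bounded (norm_mul_sineMode_le a · x)).hasSum.mul_right _)
  simpa only [sineCoeff_apply, ← integral_const_mul, mul_assoc] using hsum

/-- The odd extension to `(-1,1)` of a function on `(0,1)`, extended by zero to `ℝ`. -/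
def oddExtension (g : ℝ → ℝ) (x : ℝ) : ℝ :=
  (Ioo 0 1).indicator g x - (Ioo 0 1).indicator g (-x)

lemma oddExtension_neg (g : ℝ → ℝ) (x : ℝ) : oddExtension g (-x) = -oddExtension g x := by
  simp [oddExtension]

lemma oddExtension_of_mem (g : ℝ → ℝ) {x : ℝ} (hx : x ∈ Ioo (0 : ℝ) 1) :
    oddExtension g x = g x := by
  rw [oddExtension, indicator_of_mem hx, indicator_of_notMem fun h ↦ by linarith [h.1, hx.1],
    sub_zero]

lemma memLp_oddExtension {g : ℝ → ℝ} {p : ENNReal} (hg : MemLp g p μ01) :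
    MemLp (oddExtension g) p volume := by
  have hind : MemLp ((Ioo 0 1).indicator g) p volume :=
    (memLp_indicator_iff_restrict measurableSet_Ioo).2 hg
  exact hind.sub (hind.comp_measurePreserving (Measure.measurePreserving_neg volume))

lemma integral_neg_eq_integral_add_comp_neg {E : Type*} [NormedAddCommGroup E] [NormedSpace ℝ E]
    {f : ℝ → E} {a : ℝ} (ha : 0 ≤ a) (hf : IntervalIntegrable f volume (-a) a) :
    ∫ x in -a..a, f x = ∫ x in 0..a, (f x + f (-x)) := by
  have hleft : IntervalIntegrable f volume (-a) 0 :=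
    hf.mono_set (uIcc_subset_uIcc left_mem_uIcc (by rw [uIcc_of_le (by linarith)]; simpa))
  have hright : IntervalIntegrable f volume 0 a :=
    hf.mono_set (uIcc_subset_uIcc (by rw [uIcc_of_le (by linarith)]; simpa) right_mem_uIcc)
  have hneg : IntervalIntegrable (fun x ↦ f (-x)) volume 0 a := by
    simpa using (IntervalIntegrable.iff_comp_neg (by simp)).1 hleft.symm
  rw [intervalIntegral.integral_add hright hneg, intervalIntegral.integral_comp_neg, neg_zero,
    ← intervalIntegral.integral_add_adjacent_intervals hleft hright, add_comm]

lemma fourier_sub_fourier_neg (n : ℤ) (x : ℝ) :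
    fourier (-n) (x : AddCircle ((1 : ℝ) - -1)) - fourier (-n) ((-x : ℝ) : AddCircle ((1 : ℝ) - -1))
      = -(2 * Complex.I * sineMode n x) := by
  have harg (y : ℝ) : 2 * (Real.pi : ℂ) * Complex.I * (-n : ℤ) * y / ((1 - -1 : ℝ) : ℂ)
      = -((n * Real.pi * y : ℝ) : ℂ) * Complex.I := by
    push_cast
    ring
  rw [fourier_coe_apply, fourier_coe_apply, harg, harg, Complex.exp_mul_I, Complex.exp_mul_I,
    sineMode]
  push_cast
  simp only [mul_neg, neg_neg, Complex.cos_neg, Complex.sin_neg]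
  ring

lemma fourierCoeffOn_oddExtension (v : Hsp) (n : ℤ) :
    fourierCoeffOn (neg_lt_self one_pos : (-1 : ℝ) < 1) (fun x ↦ (oddExtension v x : ℂ)) n
      = -Complex.I * sineCoeff n v := by
  have hint : IntervalIntegrable (fun x ↦ fourier (-n) (x : AddCircle ((1 : ℝ) - -1)) •
      (oddExtension v x : ℂ)) volume (-1) 1 := by
    have hodd : Integrable (oddExtension v) := memLp_one_iff_integrable.1
      (memLp_oddExtension (memLp_one_iff_integrable.2 (integrable_Hsp v)))
    exact hodd.ofReal.intervalIntegrable.continuousOn_mul (by fun_prop)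
  have hfold : ∀ x ∈ Ioo (0 : ℝ) 1, fourier (-n) (x : AddCircle ((1 : ℝ) - -1)) •
      (oddExtension v x : ℂ) + fourier (-n) ((-x : ℝ) : AddCircle ((1 : ℝ) - -1)) •
      (oddExtension v (-x) : ℂ) = -(2 * Complex.I) * ((sineMode n x * v x : ℝ) : ℂ) := by
    intro x hx
    rw [oddExtension_neg, oddExtension_of_mem _ hx, Complex.ofReal_neg, smul_neg, ← sub_eq_add_neg,
      ← sub_smul, fourier_sub_fourier_neg, smul_eq_mul, Complex.ofReal_mul]
    ring
  rw [fourierCoeffOn_eq_integral, integral_neg_eq_integral_add_comp_neg zero_le_one hint,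
    intervalIntegral.integral_congr_Ioo_of_le zero_le_one hfold,
    intervalIntegral.integral_const_mul, intervalIntegral.integral_ofReal, ← integral_μ01,
    ← sineCoeff_apply, Complex.real_smul]
  push_cast
  ring

/-- Parseval's identity, read off from the Fourier series of the odd extension. -/
lemma hasSum_sq_sineCoeff (v : Hsp) : HasSum (fun n ↦ sineCoeff n v ^ 2) (‖v‖ ^ 2) := by
  have hmem : MemLp (fun x ↦ (oddExtension v x : ℂ)) 2 := (memLp_oddExtension (Lp.memLp v)).ofReal
  have hparseval := hasSum_sq_fourierCoeffOn (neg_lt_self one_pos : (-1 : ℝ) < 1)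
    (hmem.restrict (Ioc (-1) 1))
  simp only [fourierCoeffOn_oddExtension, norm_mul, norm_neg, Complex.norm_I, one_mul,
    Complex.norm_real, Real.norm_eq_abs, sq_abs] at hparseval
  have hint : IntervalIntegrable (fun x ↦ oddExtension v x ^ 2) volume (-1) 1 :=
    (memLp_oddExtension (Lp.memLp v)).integrable_sq.intervalIntegrable
  have hfold : ∀ x ∈ Ioo (0 : ℝ) 1, oddExtension v x ^ 2 + oddExtension v (-x) ^ 2
      = 2 * v x ^ 2 := by
    intro x hx
    rw [oddExtension_neg, oddExtension_of_mem _ hx]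
    ring
  rw [integral_neg_eq_integral_add_comp_neg zero_le_one hint,
    intervalIntegral.integral_congr_Ioo_of_le zero_le_one hfold,
    intervalIntegral.integral_const_mul, ← integral_μ01] at hparseval
  convert! hparseval using 1
  rw [← real_inner_self_eq_norm_sq, L2.inner_def, smul_eq_mul, ← mul_assoc]
  norm_num

lemma hasSum_sineCoeff_mul_sineCoeff (v w : Hsp) :
    HasSum (fun n ↦ sineCoeff n v * sineCoeff n w) (inner ℝ v w) := by
  have hsum := (((hasSum_sq_sineCoeff (v + w)).sub (hasSum_sq_sineCoeff v)).sub
    (hasSum_sq_sineCoeff w)).div_const 2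
  rw [real_inner_eq_norm_add_mul_self_sub_norm_mul_self_sub_norm_mul_self_div_two, ← sq, ← sq, ← sq]
  refine hsum.congr_fun fun n ↦ ?_
  rw [map_add]
  ring

lemma norm_sineCoeff_le (n : ℤ) (v : Hsp) : ‖sineCoeff n v‖ ≤ ‖v‖ :=
  abs_le_of_sq_le_sq (le_hasSum (hasSum_sq_sineCoeff v) n fun _ _ ↦ sq_nonneg _) (norm_nonneg v)

lemma eq_of_sineCoeff_eq {v w : Hsp} (h : ∀ n, sineCoeff n v = sineCoeff n w) : v = w := by
  have hsum := hasSum_sq_sineCoeff (v - w)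
  simp only [map_sub, h, sub_self, ne_eq, OfNat.ofNat_ne_zero, not_false_eq_true, zero_pow] at hsum
  exact sub_eq_zero.1 (norm_eq_zero.1 (pow_eq_zero_iff two_ne_zero |>.1 (hsum.unique hasSum_zero)))

lemma sineSeries_sineCoeff_ae_eq {v : Hsp} (hv : Summable fun n ↦ sineCoeff n v) :
    sineSeries (fun n ↦ sineCoeff n v) =ᵐ[μ01] v := by
  have hmem : MemLp (sineSeries fun n ↦ sineCoeff n v) 2 μ01 :=
    .of_bound (continuous_sineSeries hv).aestronglyMeasurable _
      (.of_forall (norm_sineSeries_le hv))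
  have hinner (w : Hsp) : inner ℝ (hmem.toLp _) w = inner ℝ v w := by
    rw [(hasSum_sineCoeff_mul_sineCoeff v w).unique (hasSum_mul_sineCoeff hv w), L2.inner_def]
    refine integral_congr_ae ?_
    filter_upwards [hmem.coeFn_toLp] with x hx
    rw [hx, RCLike.inner_apply, conj_trivial, mul_comm]
  have hcoe := hmem.coeFn_toLp
  rw [ext_inner_right ℝ hinner] at hcoe
  exact hcoe.symm

end SineSeries

section HeatKernel

/-- The eigenvalue of `-∂²/∂x²` with Dirichlet boundary conditions belonging to `sineMode n`. -/
def dirichletEigenvalue (n : ℤ) : ℝ := (n * Real.pi) ^ 2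

/-- The Dirichlet heat kernel on `(0,1)` at time `δ`. -/
def heatKernel (δ x : ℝ) : ℝ → ℝ :=
  sineSeries fun n ↦ Real.exp (-dirichletEigenvalue n * δ) * sineMode n x

/-- The heat semigroup: the value at `x` of the solution with initial datum `v`, after time `δ`. -/
def heatFlow (δ : ℝ) (v : Hsp) (x : ℝ) : ℝ := ∫ y, heatKernel δ x y * v y ∂μ01

lemma exp_neg_dirichletEigenvalue_mul (n : ℤ) (δ : ℝ) :
    Real.exp (-dirichletEigenvalue n * δ) = Real.exp (-(Real.pi ^ 2 * δ)) ^ (n ^ 2) := by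
  rw [← Real.rpow_intCast, ← Real.exp_mul, dirichletEigenvalue]
  push_cast
  ring_nf

variable {δ : ℝ}

lemma exp_neg_pi_sq_mul_lt_one (hδ : 0 < δ) : Real.exp (-(Real.pi ^ 2 * δ)) < 1 :=
  Real.exp_lt_one_iff.2 (neg_lt_zero.2 (by positivity))

lemma summable_exp_neg_dirichletEigenvalue_mul (hδ : 0 < δ) :
    Summable fun n ↦ Real.exp (-dirichletEigenvalue n * δ) := by
  simpa only [exp_neg_dirichletEigenvalue_mul] using
    summable_zpow_sq (Real.exp_pos _) (exp_neg_pi_sq_mul_lt_one hδ)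

lemma summable_heatKernel_coeff (hδ : 0 < δ) (x : ℝ) :
    Summable fun n ↦ Real.exp (-dirichletEigenvalue n * δ) * sineMode n x := by
  refine (summable_exp_neg_dirichletEigenvalue_mul hδ).of_norm_bounded fun n ↦ ?_
  simpa only [Real.abs_exp] using
    norm_mul_sineMode_le (fun n ↦ Real.exp (-dirichletEigenvalue n * δ)) n x

/-- By `2 sin a sin b = cos (a - b) - cos (a + b)`, the heat kernel is a difference of two values of
a theta function. -/
lemma two_mul_heatKernel (hδ : 0 < δ) (x y : ℝ) :
    2 * heatKernel δ x y
      = cosTheta (Real.exp (-(Real.pi ^ 2 * δ))) (Real.pi * x - Real.pi * y)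
        - cosTheta (Real.exp (-(Real.pi ^ 2 * δ))) (Real.pi * x + Real.pi * y) := by
  have hsum := summable_zpow_sq_mul_cos (Real.exp_pos _) (exp_neg_pi_sq_mul_lt_one hδ)
  rw [cosTheta, cosTheta, ← (hsum _).tsum_sub (hsum _), heatKernel, sineSeries, ← tsum_mul_left]
  refine tsum_congr fun n ↦ ?_
  rw [mul_sub (n : ℝ), mul_add (n : ℝ), Real.cos_sub, Real.cos_add, ← mul_assoc (n : ℝ),
    ← mul_assoc (n : ℝ), exp_neg_dirichletEigenvalue_mul, sineMode, sineMode]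
  ring

lemma heatKernel_pos (hδ : 0 < δ) {x y : ℝ} (hx : x ∈ Ioo (0 : ℝ) 1) (hy : y ∈ Ioo (0 : ℝ) 1) :
    0 < heatKernel δ x y := by
  have hsin {z : ℝ} (hz : z ∈ Ioo (0 : ℝ) 1) : 0 < Real.sin (Real.pi * z) :=
    Real.sin_pos_of_pos_of_lt_pi (mul_pos Real.pi_pos hz.1)
      (mul_lt_of_lt_one_right Real.pi_pos hz.2)
  have hcos : Real.cos (Real.pi * x + Real.pi * y) < Real.cos (Real.pi * x - Real.pi * y) := by
    rw [Real.cos_add, Real.cos_sub]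
    linarith [mul_pos (hsin hx) (hsin hy)]
  linarith [two_mul_heatKernel hδ x y,
    cosTheta_lt_cosTheta (Real.exp_pos _) (exp_neg_pi_sq_mul_lt_one hδ) hcos]

lemma hasSum_heatFlow (hδ : 0 < δ) (v : Hsp) (x : ℝ) :
    HasSum (fun n ↦ Real.exp (-dirichletEigenvalue n * δ) * sineMode n x * sineCoeff n v)
      (heatFlow δ v x) :=
  hasSum_mul_sineCoeff (summable_heatKernel_coeff hδ x) v

lemma ae_heatKernel_mul_nonneg (hδ : 0 < δ) {v : Hsp} (hv : 0 ≤ᵐ[μ01] v) {x : ℝ}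
    (hx : x ∈ Ioo (0 : ℝ) 1) : ∀ᵐ y ∂μ01, 0 ≤ heatKernel δ x y * v y := by
  filter_upwards [hv, ae_mem_Ioo_μ01] with y hvy hy
  exact mul_nonneg (heatKernel_pos hδ hx hy).le hvy

lemma heatFlow_nonneg (hδ : 0 < δ) {v : Hsp} (hv : 0 ≤ᵐ[μ01] v) {x : ℝ}
    (hx : x ∈ Ioo (0 : ℝ) 1) : 0 ≤ heatFlow δ v x :=
  integral_nonneg_of_ae (ae_heatKernel_mul_nonneg hδ hv hx)

lemma heatFlow_pos (hδ : 0 < δ) {v : Hsp} (hv : 0 ≤ᵐ[μ01] v) (hv0 : v ≠ 0) {x : ℝ}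
    (hx : x ∈ Ioo (0 : ℝ) 1) : 0 < heatFlow δ v x := by
  refine (heatFlow_nonneg hδ hv hx).lt_of_ne' fun hzero ↦ hv0 (Lp.eq_zero_iff_ae_eq_zero.2 ?_)
  have hae := (integral_eq_zero_iff_of_nonneg_ae (ae_heatKernel_mul_nonneg hδ hv hx)
    (integrable_sineSeries_mul (summable_heatKernel_coeff hδ x) v)).1 hzero
  filter_upwards [hae, ae_mem_Ioo_μ01] with y hmul hy
  exact (mul_eq_zero.1 hmul).resolve_left (heatKernel_pos hδ hx hy).ne'

end HeatKernel

section DirichletDomain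

lemma integral_mul_add_primitive_mul_deriv {f g g' : ℝ → ℝ} {a b : ℝ} (c : ℝ)
    (hf : IntervalIntegrable f volume a b) (hg : ∀ x, HasDerivAt g (g' x) x)
    (hg' : Continuous g') :
    ∫ x in a..b, (f x * g x + g' x * (c + ∫ s in a..x, f s))
      = (c + ∫ s in a..b, f s) * g b - c * g a := by
  have hderiv : deriv g = g' := funext fun x ↦ (hg x).deriv
  have hgAC : AbsolutelyContinuousOnInterval g a b :=
    (contDiff_one_iff_deriv.2 ⟨fun x ↦ (hg x).differentiableAt,
      hderiv ▸ hg'⟩).contDiffOn.absolutelyContinuousOnInterval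
  have hconst : AbsolutelyContinuousOnInterval (fun _ : ℝ ↦ c) a b :=
    (contDiff_const (n := 1)).contDiffOn.absolutelyContinuousOnInterval
  have hFAC : AbsolutelyContinuousOnInterval (fun x ↦ c + ∫ s in a..x, f s) a b :=
    hconst.add (hf.absolutelyContinuousOnInterval_intervalIntegral left_mem_uIcc)
  have hparts := hFAC.integral_deriv_mul_eq_sub hgAC
  simp only [intervalIntegral.integral_same, add_zero, hderiv] at hparts
  rw [← hparts]
  refine intervalIntegral.integral_congr_ae ?_
  filter_upwards [hf.ae_hasDerivAt_integral] with x hx hxab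
  rw [((hx (uIoc_subset_uIcc hxab) a left_mem_uIcc).const_add c).deriv, mul_comm (g' x)]

lemma continuousOn_primitive_Hsp (w : Hsp) :
    ContinuousOn (fun x ↦ ∫ z in (0 : ℝ)..x, w z) (Icc 0 1) := by
  have hcont := intervalIntegral.continuousOn_primitive_interval' (intervalIntegrable_Hsp w)
    left_mem_uIcc
  rwa [uIcc_of_le zero_le_one] at hcont

lemma InDomainA.exists_hasDerivAt {v w : Hsp} (h : InDomainA v w) :
    ∃ (vt : ℝ → ℝ) (c : ℝ), ContinuousOn vt (Icc 0 1) ∧ vt 0 = 0 ∧ vt 1 = 0 ∧ vt =ᵐ[μ01] v ∧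
      ∀ x ∈ Ioo (0 : ℝ) 1, HasDerivAt vt (c + ∫ z in (0 : ℝ)..x, w z) x := by
  obtain ⟨vt, hcont, h0, h1, hae, g, hderiv, hg⟩ := h
  have hint {x : ℝ} (hx : x ∈ Ioo (0 : ℝ) 1) : IntervalIntegrable w volume 0 x :=
    (intervalIntegrable_Hsp w).mono_set
      (uIcc_subset_uIcc left_mem_uIcc (Icc_subset_uIcc (Ioo_subset_Icc_self hx)))
  have hhalf : (1 / 2 : ℝ) ∈ Ioo (0 : ℝ) 1 := by norm_num
  refine ⟨vt, g (1 / 2) - ∫ z in (0 : ℝ)..(1 / 2), w z, hcont, h0, h1, hae, fun x hx ↦ ?_⟩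
  have hsub := hg x hx _ hhalf
  rw [← intervalIntegral.integral_interval_sub_left (hint hx) (hint hhalf)] at hsub
  convert! hderiv x hx using 1
  linarith

lemma hasDerivAt_sineMode (n : ℤ) (x : ℝ) :
    HasDerivAt (sineMode n) (n * Real.pi * Real.cos (n * Real.pi * x)) x := by
  convert! ((hasDerivAt_id x).const_mul (n * Real.pi)).sin using 1
  rw [id, mul_one, mul_comm]

lemma hasDerivAt_deriv_sineMode (n : ℤ) (x : ℝ) :
    HasDerivAt (fun x ↦ n * Real.pi * Real.cos (n * Real.pi * x))
      (-dirichletEigenvalue n * sineMode n x) x := by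
  convert! (((hasDerivAt_id x).const_mul (n * Real.pi)).cos).const_mul (n * Real.pi) using 1
  rw [dirichletEigenvalue, sineMode, id]
  ring

lemma sineMode_zero_right (n : ℤ) : sineMode n 0 = 0 := by simp [sineMode]

lemma sineMode_one_right (n : ℤ) : sineMode n 1 = 0 := by simp [sineMode, Real.sin_int_mul_pi]

lemma InDomainA.sineCoeff_eq {v w : Hsp} (h : InDomainA v w) (n : ℤ) :
    sineCoeff n w = -dirichletEigenvalue n * sineCoeff n v := by
  obtain ⟨vt, c, hcont, h0, h1, hae, hderiv⟩ := h.exists_hasDerivAt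
  set G : ℝ → ℝ := fun x ↦ c + ∫ z in (0 : ℝ)..x, w z
  have hG : ContinuousOn G (uIcc 0 1) := by
    rw [uIcc_of_le zero_le_one]
    exact continuousOn_const.add (continuousOn_primitive_Hsp w)
  have hparts₁ := integral_mul_add_primitive_mul_deriv c (intervalIntegrable_Hsp w)
    (hasDerivAt_sineMode n) (by fun_prop)
  have hint₁ := (intervalIntegrable_Hsp w).mul_continuousOn (continuous_sineMode n).continuousOn
  have hint₂ : IntervalIntegrable
      (fun x ↦ n * Real.pi * Real.cos (n * Real.pi * x) * G x) volume 0 1 :=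
    (ContinuousOn.mul (by fun_prop) hG).intervalIntegrable
  have hparts₂ := intervalIntegral.integral_mul_deriv_eq_deriv_mul_of_hasDerivAt
    (fun x _ ↦ (hasDerivAt_deriv_sineMode n x).continuousAt.continuousWithinAt)
    (by rwa [uIcc_of_le zero_le_one]) (fun x _ ↦ hasDerivAt_deriv_sineMode n x)
    (fun x hx ↦ hderiv x (by simpa using hx))
    ((continuous_sineMode n).const_mul _).continuousOn.intervalIntegrable hG.intervalIntegrable
  rw [intervalIntegral.integral_add hint₁ hint₂, sineMode_zero_right, sineMode_one_right] at hparts₁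
  rw [h0, h1] at hparts₂
  have hw : sineCoeff n w = ∫ x in (0 : ℝ)..1, w x * sineMode n x := by
    simp only [sineCoeff_apply, integral_μ01, mul_comm]
  have hv : sineCoeff n v = ∫ x in (0 : ℝ)..1, sineMode n x * vt x := by
    rw [sineCoeff_apply, ← integral_μ01]
    exact integral_congr_ae (hae.mono fun x hx ↦ by simp only [hx])
  simp only [mul_assoc (-dirichletEigenvalue n), intervalIntegral.integral_const_mul, ← hv]
    at hparts₂
  rw [hparts₂, ← hw] at hparts₁
  linarith

/-- All but countably many points of a set of reals are accumulation points of it. -/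
lemma ae_hasDerivAt_eq_zero_of_eqOn_zero {E : Type*} [NormedAddCommGroup E] [NormedSpace ℝ E]
    {μ : Measure ℝ} [NullSingletonClass μ] {F : ℝ → E} {S : Set ℝ} (hF : ∀ x ∈ S, F x = 0) :
    ∀ᵐ x ∂μ, x ∈ S → ∀ d, HasDerivAt F d x → d = 0 := by
  have hisolated : μ {x ∈ S | 𝓝[S ∩ Ioi x] x = ⊥} = 0 :=
    countable_setOfPred_isolated_right_within.measure_zero _
  filter_upwards [measure_eq_zero_iff_ae_notMem.1 hisolated] with x hx hxS d hd
  have hacc : (𝓝[S ∩ Ioi x] x).NeBot := ⟨fun hbot ↦ hx ⟨hxS, hbot⟩⟩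
  have hunique : UniqueDiffWithinAt ℝ S x := by
    rw [uniqueDiffWithinAt_iff_accPt, accPt_principal_iff_nhdsWithin]
    exact hacc.mono (nhdsWithin_mono x fun y hy ↦ ⟨hy.1, hy.2.ne'⟩)
  exact hunique.eq_deriv S hd.hasDerivWithinAt
    ((hasDerivWithinAt_const x S 0).congr hF (hF x hxS))

lemma nonneg_of_ae_nonneg_of_continuousOn {X : Type*} [TopologicalSpace X] [MeasurableSpace X]
    {μ : Measure X} [μ.IsOpenPosMeasure] {U : Set X} (hU : IsOpen U) {f : X → ℝ}
    (hf : ContinuousOn f U) (hnonneg : 0 ≤ᵐ[μ.restrict U] f) : ∀ x ∈ U, 0 ≤ f x := by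
  have hmax : (fun x ↦ max (f x) 0) =ᵐ[μ.restrict U] f := hnonneg.mono fun x hx ↦ max_eq_left hx
  intro x hx
  exact max_eq_left_iff.1 (Measure.eqOn_open_of_ae_eq hmax hU (hf.sup continuousOn_const) hf hx)

lemma InDomainA.ae_eq_zero_of_nonneg {v w : Hsp} (h : InDomainA v w) (hv : 0 ≤ᵐ[μ01] v) :
    ∀ᵐ x ∂μ01, v x = 0 → w x = 0 := by
  obtain ⟨vt, c, hcont, -, -, hae, hderiv⟩ := h.exists_hasDerivAt
  have hnonneg := nonneg_of_ae_nonneg_of_continuousOn isOpen_Ioo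
    (hcont.mono Ioo_subset_Icc_self) (hv.trans_eq hae.symm)
  have hcritical : ∀ x ∈ {x ∈ Ioo (0 : ℝ) 1 | vt x = 0}, c + ∫ z in (0 : ℝ)..x, w z = 0 := by
    rintro x ⟨hx, hx0⟩
    have hmin : IsLocalMin vt x := by
      filter_upwards [isOpen_Ioo.mem_nhds hx] with y hy
      exact hx0 ▸ hnonneg y hy
    exact hmin.hasDerivAt_eq_zero (hderiv x hx)
  filter_upwards [ae_restrict_of_ae (ae_hasDerivAt_eq_zero_of_eqOn_zero hcritical),
    ae_restrict_of_ae (intervalIntegrable_Hsp w).ae_hasDerivAt_integral, ae_mem_Ioo_μ01, hae]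
    with x hzero hprimitive hx hvx hx0
  exact hzero ⟨hx, hvx.trans hx0⟩ _
    ((hprimitive (Icc_subset_uIcc (Ioo_subset_Icc_self hx)) 0 left_mem_uIcc).const_add c)

lemma ae_nonneg_of_hasDerivWithinAt_Ioi_Lp {α : Type*} {mα : MeasurableSpace α} {μ : Measure α}
    {p : ENNReal} [Fact (1 ≤ p)] {u : ℝ → Lp ℝ p μ} {d : Lp ℝ p μ} {t : ℝ}
    (hd : HasDerivWithinAt u d (Ioi t) t) (hu : ∀ s, t < s → 0 ≤ᵐ[μ] u s) :
    ∀ᵐ x ∂μ, u t x = 0 → 0 ≤ d x := by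
  obtain ⟨s, -, hs_gt, hs⟩ := exists_seq_strictAnti_tendsto t
  have hslope : Tendsto (fun k ↦ slope u t (s k)) atTop (𝓝 d) :=
    ((hasDerivWithinAt_iff_tendsto_slope' self_notMem_Ioi).1 hd).comp
      (tendsto_nhdsWithin_iff.2 ⟨hs, .of_forall hs_gt⟩)
  obtain ⟨ns, -, hns⟩ := (tendstoInMeasure_of_tendsto_Lp hslope).exists_seq_tendsto_ae
  have hnonneg : ∀ᵐ x ∂μ, ∀ k, u t x = 0 → 0 ≤ slope u t (s k) x := by
    refine ae_all_iff.2 fun k ↦ ?_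
    rw [slope_def_module]
    filter_upwards [hu _ (hs_gt k), Lp.coeFn_smul (s k - t)⁻¹ (u (s k) - u t),
      Lp.coeFn_sub (u (s k)) (u t)] with x hx hsmul hsub hx0
    rw [hsmul, Pi.smul_apply, hsub, Pi.sub_apply, hx0, sub_zero]
    exact smul_nonneg (inv_nonneg.2 (sub_nonneg.2 (hs_gt k).le)) hx
  filter_upwards [hns, hnonneg] with x hlim hk hx0
  exact ge_of_tendsto' hlim fun k ↦ hk (ns k) hx0

end DirichletDomain

section HeatEquation

/-- `u` is a strong solution on `[τ,∞)` of the linear heat equation `u' = uxx + r` with Dirichlet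
boundary conditions. As in `IsStrongSolutionWith`, the source `r`, the time derivative `u'` and the
second spatial derivative `uxx` are explicit data. -/
structure IsStrongHeatSolution (τ : ℝ) (u r u' uxx : ℝ → Hsp) : Prop where
  cont : ContinuousOn u (Ici τ)
  rmem : ∀ T, τ < T → MemLp r 2 (volume.restrict (Ioo τ T))
  dom : ∀ᵐ t ∂(volume.restrict (Ioi τ)), InDomainA (u t) (uxx t)
  eq : ∀ᵐ t ∂(volume.restrict (Ioi τ)), u' t = r t + uxx t
  fund : ∀ T1 T2 : ℝ, τ < T1 → T1 < T2 →
      IntervalIntegrable u' volume T1 T2 ∧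
      ∀ t ∈ Icc T1 T2, u t = u T1 + ∫ s in T1..t, u' s

lemma ae_restrict_Ioc_of_Ioi {P : ℝ → Prop} {τ s t : ℝ} (hs : τ ≤ s)
    (h : ∀ᵐ σ ∂(volume.restrict (Ioi τ)), P σ) : ∀ᵐ σ ∂(volume.restrict (Ioc s t)), P σ :=
  ae_restrict_of_ae_restrict_of_subset (Ioc_subset_Ioi_self.trans (Ioi_subset_Ioi hs)) h

namespace IsStrongHeatSolution

variable {τ s t : ℝ} {u r u' uxx : ℝ → Hsp}

lemma memLp_source (h : IsStrongHeatSolution τ u r u' uxx) (hs : τ ≤ s) (hst : s ≤ t) :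
    MemLp r 2 (volume.restrict (Ioc s t)) := by
  have hsub : Ioc s t ⊆ Ioo τ (t + 1) := fun σ hσ ↦
    ⟨hs.trans_lt hσ.1, hσ.2.trans_lt (lt_add_one t)⟩
  exact (h.rmem (t + 1) (by linarith)).mono_measure (Measure.restrict_mono_set _ hsub)

lemma ae_hasDerivAt (h : IsStrongHeatSolution τ u r u' uxx) (hs : τ < s) (hst : s < t) :
    ∀ᵐ σ ∂(volume.restrict (Ioc s t)), HasDerivAt u (u' σ) σ := by
  obtain ⟨hint, hu⟩ := h.fund s t hs hst
  rw [← restrict_Ioo_eq_restrict_Ioc]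
  filter_upwards [ae_restrict_mem measurableSet_Ioo,
    ae_restrict_of_ae hint.ae_hasDerivAt_integral] with σ hσ hderiv
  refine ((hderiv (Icc_subset_uIcc (Ioo_subset_Icc_self hσ)) s left_mem_uIcc).const_add
    (u s)).congr_of_eventuallyEq ?_
  filter_upwards [Icc_mem_nhds hσ.1 hσ.2] with y hy using hu y hy

/-- Where a non-negative solution vanishes, its time derivative is non-negative and its second
spatial derivative is zero. -/
lemma ae_source_nonneg_of_eq_zero (h : IsStrongHeatSolution τ u r u' uxx) (hu : NonnegOn u τ)
    (hs : τ < s) (hst : s < t) :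
    ∀ᵐ σ ∂(volume.restrict (Ioc s t)), ∀ᵐ x ∂μ01, u σ x = 0 → 0 ≤ r σ x := by
  filter_upwards [h.ae_hasDerivAt hs hst, ae_restrict_Ioc_of_Ioi hs.le h.dom,
    ae_restrict_Ioc_of_Ioi hs.le h.eq, ae_restrict_mem measurableSet_Ioc] with σ hderiv hdom heq hσ
  have hτσ : τ < σ := hs.trans hσ.1
  have hadd := Lp.coeFn_add (r σ) (uxx σ)
  rw [← heq] at hadd
  filter_upwards [ae_nonneg_of_hasDerivWithinAt_Ioi_Lp hderiv.hasDerivWithinAt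
    fun s' hs' ↦ hu s' (hτσ.trans hs').le, hdom.ae_eq_zero_of_nonneg (hu σ hτσ.le), hadd]
    with x hut huxx hadd hx0
  simpa [hadd, huxx hx0] using hut hx0

/-- Variation of constants for the sine coefficients, with an arbitrary integrating factor. -/
lemma exp_mul_sineCoeff_eq (h : IsStrongHeatSolution τ u r u' uxx) {Φ φ : ℝ → ℝ}
    (hΦ : ∀ σ, HasDerivAt Φ (φ σ) σ) (hφ : Continuous φ) (n : ℤ) (hs : τ < s) (hst : s < t) :
    Real.exp (Φ t) * sineCoeff n (u t) = Real.exp (Φ s) * sineCoeff n (u s) + ∫ σ in s..t,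
      Real.exp (Φ σ) * (sineCoeff n (r σ) + (φ σ - dirichletEigenvalue n) * sineCoeff n (u σ)) := by
  obtain ⟨hint, hu⟩ := h.fund s t hs hst
  have hΦ_cont : Continuous Φ := continuous_iff_continuousAt.2 fun σ ↦ (hΦ σ).continuousAt
  have hcoeff {σ : ℝ} (hσ : σ ∈ Icc s t) :
      sineCoeff n (u σ) = sineCoeff n (u s) + ∫ z in s..σ, sineCoeff n (u' z) := by
    rw [hu σ hσ, map_add, ContinuousLinearMap.intervalIntegral_comp_comm _
      (hint.mono_set (uIcc_subset_uIcc left_mem_uIcc (Icc_subset_uIcc hσ)))]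
  have hint_coeff : IntervalIntegrable (fun σ ↦ sineCoeff n (u' σ)) volume s t :=
    ⟨(sineCoeff n).integrable_comp hint.1, (sineCoeff n).integrable_comp hint.2⟩
  have hparts := integral_mul_add_primitive_mul_deriv (sineCoeff n (u s)) hint_coeff
    (fun σ ↦ (hΦ σ).exp) (by fun_prop)
  rw [← hcoeff (right_mem_Icc.2 hst.le)] at hparts
  rw [mul_comm, eq_add_of_sub_eq' hparts.symm, mul_comm (sineCoeff n (u s))]
  congr 1
  rw [intervalIntegral.integral_of_le hst.le, intervalIntegral.integral_of_le hst.le]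
  refine integral_congr_ae ?_
  filter_upwards [ae_restrict_Ioc_of_Ioi hs.le h.dom, ae_restrict_Ioc_of_Ioi hs.le h.eq,
    ae_restrict_mem measurableSet_Ioc] with σ hdom heq hσ
  rw [← hcoeff (Ioc_subset_Icc_self hσ), heq, map_add, hdom.sineCoeff_eq n]
  ring

lemma sineCoeff_eq (h : IsStrongHeatSolution τ u r u' uxx) (n : ℤ) (hs : τ < s) (hst : s < t) :
    sineCoeff n (u t) = Real.exp (-dirichletEigenvalue n * (t - s)) * sineCoeff n (u s) +
      ∫ σ in Ioc s t, Real.exp (-dirichletEigenvalue n * (t - σ)) * sineCoeff n (r σ) := by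
  have hΦ (σ : ℝ) : HasDerivAt (fun σ ↦ -dirichletEigenvalue n * (t - σ))
      (dirichletEigenvalue n) σ := by
    simpa using ((hasDerivAt_id σ).const_sub t).const_mul (-dirichletEigenvalue n)
  simpa [intervalIntegral.integral_of_le hst.le] using
    h.exp_mul_sineCoeff_eq hΦ continuous_const n hs hst

end IsStrongHeatSolution

section Duhamel

variable {s t : ℝ} {r : ℝ → Hsp}

lemma dirichletEigenvalue_pos {n : ℤ} (hn : n ≠ 0) : 0 < dirichletEigenvalue n := by
  have : (n : ℝ) ≠ 0 := Int.cast_ne_zero.2 hn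
  unfold dirichletEigenvalue
  positivity

lemma sineCoeff_zero (v : Hsp) : sineCoeff 0 v = 0 := by simp [sineCoeff_apply, sineMode]

lemma summable_inv_dirichletEigenvalue : Summable fun n ↦ (dirichletEigenvalue n)⁻¹ := by
  simpa [dirichletEigenvalue, mul_pow, mul_comm] using
    (Real.summable_one_div_int_pow.2 one_lt_two).mul_left (Real.pi ^ 2)⁻¹

lemma integral_exp_neg_mul_sub_le {l : ℝ} (hl : 0 < l) (hst : s ≤ t) :
    ∫ σ in Ioc s t, Real.exp (-l * (t - σ)) ≤ l⁻¹ := by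
  have hderiv (σ : ℝ) : HasDerivAt (fun σ ↦ l⁻¹ * Real.exp (-l * (t - σ)))
      (Real.exp (-l * (t - σ))) σ := by
    convert! ((((hasDerivAt_id σ).const_sub t).const_mul (-l)).exp).const_mul l⁻¹ using 1
    simp [field]
  rw [← intervalIntegral.integral_of_le hst,
    intervalIntegral.integral_eq_sub_of_hasDerivAt (fun σ _ ↦ hderiv σ)
      (Continuous.intervalIntegrable (by fun_prop) _ _)]
  have : 0 < l⁻¹ * Real.exp (-l * (t - s)) := by positivity
  simp only [sub_self, mul_zero, Real.exp_zero, mul_one]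
  linarith

lemma integrable_sq_sineCoeff {ν : Measure ℝ} (hr : MemLp r 2 ν) (n : ℤ) :
    Integrable (fun σ ↦ sineCoeff n (r σ) ^ 2) ν :=
  ((sineCoeff n).comp_memLp' hr).integrable_sq

lemma summable_integral_sq_sineCoeff {ν : Measure ℝ} (hr : MemLp r 2 ν) :
    Summable fun n ↦ ∫ σ, sineCoeff n (r σ) ^ 2 ∂ν := by
  refine summable_of_sum_le (c := ∫ σ, ‖r σ‖ ^ 2 ∂ν)
    (fun n ↦ integral_nonneg fun σ ↦ sq_nonneg _) fun F ↦ ?_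
  rw [← integral_finsetSum _ fun n _ ↦ integrable_sq_sineCoeff hr n]
  exact integral_mono (integrable_finsetSum _ fun n _ ↦ integrable_sq_sineCoeff hr n)
    hr.norm.integrable_sq
    fun σ ↦ sum_le_hasSum F (fun n _ ↦ sq_nonneg _) (hasSum_sq_sineCoeff (r σ))

lemma integrable_exp_mul_sineCoeff (hr : MemLp r 2 (volume.restrict (Ioc s t))) (n : ℤ) :
    IntegrableOn (fun σ ↦ Real.exp (-dirichletEigenvalue n * (t - σ)) * sineCoeff n (r σ))
      (Ioc s t) :=
  IntegrableOn.continuousOn_mul_of_subset (K := Icc s t) (by fun_prop)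
    ((sineCoeff n).integrable_comp (hr.integrable one_le_two)) isCompact_Icc
    measurableSet_Ioc Ioc_subset_Icc_self

lemma integral_norm_exp_mul_sineCoeff_le (hst : s ≤ t)
    (hr : MemLp r 2 (volume.restrict (Ioc s t))) (n : ℤ) :
    ∫ σ in Ioc s t, ‖Real.exp (-dirichletEigenvalue n * (t - σ)) * sineCoeff n (r σ)‖
      ≤ (dirichletEigenvalue n)⁻¹ + ∫ σ in Ioc s t, sineCoeff n (r σ) ^ 2 := by
  rcases eq_or_ne n 0 with rfl | hn
  · simp [sineCoeff_zero, dirichletEigenvalue]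
  have hexp : IntegrableOn (fun σ ↦ Real.exp (-dirichletEigenvalue n * (t - σ))) (Ioc s t) :=
    Continuous.integrableOn_Ioc (by fun_prop)
  have hpointwise : ∀ σ ∈ Ioc s t,
      ‖Real.exp (-dirichletEigenvalue n * (t - σ)) * sineCoeff n (r σ)‖
        ≤ Real.exp (-dirichletEigenvalue n * (t - σ)) + sineCoeff n (r σ) ^ 2 := by
    intro σ hσ
    have hexp_le : Real.exp (-dirichletEigenvalue n * (t - σ)) ≤ 1 :=
      Real.exp_le_one_iff.2 (mul_nonpos_of_nonpos_of_nonneg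
        (neg_nonpos.2 (dirichletEigenvalue_pos hn).le) (sub_nonneg.2 hσ.2))
    rw [norm_mul, Real.norm_eq_abs, Real.abs_exp, Real.norm_eq_abs, ← sq_abs (sineCoeff n (r σ))]
    nlinarith [Real.exp_pos (-dirichletEigenvalue n * (t - σ)), abs_nonneg (sineCoeff n (r σ)),
      sq_nonneg (Real.exp (-dirichletEigenvalue n * (t - σ)) - |sineCoeff n (r σ)|)]
  calc ∫ σ in Ioc s t, ‖Real.exp (-dirichletEigenvalue n * (t - σ)) * sineCoeff n (r σ)‖
      ≤ ∫ σ in Ioc s t, (Real.exp (-dirichletEigenvalue n * (t - σ)) + sineCoeff n (r σ) ^ 2) :=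
        setIntegral_mono_on (integrable_exp_mul_sineCoeff hr n).norm
          (hexp.add (integrable_sq_sineCoeff hr n)) measurableSet_Ioc hpointwise
    _ = (∫ σ in Ioc s t, Real.exp (-dirichletEigenvalue n * (t - σ)))
          + ∫ σ in Ioc s t, sineCoeff n (r σ) ^ 2 :=
        integral_add hexp (integrable_sq_sineCoeff hr n)
    _ ≤ (dirichletEigenvalue n)⁻¹ + ∫ σ in Ioc s t, sineCoeff n (r σ) ^ 2 :=
        add_le_add_left (integral_exp_neg_mul_sub_le (dirichletEigenvalue_pos hn) hst) _

lemma summable_integral_norm_exp_mul_sineCoeff (hst : s ≤ t)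
    (hr : MemLp r 2 (volume.restrict (Ioc s t))) :
    Summable fun n ↦
      ∫ σ in Ioc s t, ‖Real.exp (-dirichletEigenvalue n * (t - σ)) * sineCoeff n (r σ)‖ :=
  .of_nonneg_of_le (fun _ ↦ integral_nonneg fun _ ↦ norm_nonneg _)
    (integral_norm_exp_mul_sineCoeff_le hst hr)
    (summable_inv_dirichletEigenvalue.add (summable_integral_sq_sineCoeff hr))

lemma hasSum_integral_heatFlow (hst : s ≤ t) (hr : MemLp r 2 (volume.restrict (Ioc s t)))
    (x : ℝ) :
    HasSum (fun n ↦ sineMode n x *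
        ∫ σ in Ioc s t, Real.exp (-dirichletEigenvalue n * (t - σ)) * sineCoeff n (r σ))
      (∫ σ in Ioc s t, heatFlow (t - σ) (r σ) x) := by
  have hsum := hasSum_integral_of_summable_integral_norm
    (fun n ↦ (integrable_exp_mul_sineCoeff hr n).const_mul (sineMode n x)) <| by
      simp only [norm_mul (sineMode _ x), integral_const_mul]
      exact .of_nonneg_of_le
        (fun n ↦ mul_nonneg (norm_nonneg _) (integral_nonneg fun σ ↦ norm_nonneg _))
        (fun n ↦ mul_le_of_le_one_left (integral_nonneg fun σ ↦ norm_nonneg _)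
          (abs_sineMode_le_one n x))
        (summable_integral_norm_exp_mul_sineCoeff hst hr)
  simp only [integral_const_mul] at hsum
  convert! hsum using 1
  rw [← restrict_Ioo_eq_restrict_Ioc]
  refine setIntegral_congr_fun measurableSet_Ioo fun σ hσ ↦ ?_
  rw [← (hasSum_heatFlow (sub_pos.2 hσ.2) (r σ) x).tsum_eq]
  exact tsum_congr fun n ↦ by ring

end Duhamel

namespace IsStrongHeatSolution

variable {τ s t : ℝ} {u r u' uxx : ℝ → Hsp}

lemma summable_sineCoeff (h : IsStrongHeatSolution τ u r u' uxx) (hs : τ < s) (hst : s < t) :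
    Summable fun n ↦ sineCoeff n (u t) := by
  simp only [h.sineCoeff_eq _ hs hst]
  refine .add ?_ (.of_norm_bounded (summable_integral_norm_exp_mul_sineCoeff hst.le
    (h.memLp_source hs.le hst.le)) fun n ↦ norm_integral_le_integral_norm _)
  refine .of_norm_bounded ((summable_exp_neg_dirichletEigenvalue_mul
    (sub_pos.2 hst)).mul_right ‖u s‖) fun n ↦ ?_
  rw [norm_mul, Real.norm_eq_abs, Real.abs_exp]
  gcongr
  exact norm_sineCoeff_le n (u s)

/-- Duhamel's formula. -/
lemma sineSeries_sineCoeff_eq (h : IsStrongHeatSolution τ u r u' uxx) (hs : τ < s) (hst : s < t)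
    (x : ℝ) :
    sineSeries (fun n ↦ sineCoeff n (u t)) x
      = heatFlow (t - s) (u s) x + ∫ σ in Ioc s t, heatFlow (t - σ) (r σ) x := by
  rw [sineSeries, ← ((hasSum_heatFlow (sub_pos.2 hst) (u s) x).add
    (hasSum_integral_heatFlow hst.le (h.memLp_source hs.le hst.le) x)).tsum_eq]
  refine tsum_congr fun n ↦ ?_
  rw [h.sineCoeff_eq n hs hst]
  ring

/-- The strong maximum principle. -/
lemma isPositive_of_source_nonneg (h : IsStrongHeatSolution τ u r u' uxx) (hs : τ < s)
    (hst : s < t) (hus : 0 ≤ᵐ[μ01] u s) (hus0 : u s ≠ 0)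
    (hr : ∀ᵐ σ ∂(volume.restrict (Ioc s t)), 0 ≤ᵐ[μ01] r σ) : IsPositive (u t) := by
  have hsum := h.summable_sineCoeff hs hst
  refine ⟨_, (continuous_sineSeries hsum).continuousOn, sineSeries_sineCoeff_ae_eq hsum,
    fun x hx ↦ ?_⟩
  rw [h.sineSeries_sineCoeff_eq hs hst]
  refine add_pos_of_pos_of_nonneg (heatFlow_pos (sub_pos.2 hst) hus hus0 hx) ?_
  rw [← restrict_Ioo_eq_restrict_Ioc] at hr ⊢
  refine integral_nonneg_of_ae ?_
  filter_upwards [hr, ae_restrict_mem measurableSet_Ioo] with σ hrσ hσ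
  exact heatFlow_nonneg (sub_pos.2 hσ.2) hrσ hx

lemma exp_mul_sineCoeff_eq_of_source_sub_smul_eq {w q w' wxx : ℝ → Hsp} {ω Φ : ℝ → ℝ} {n : ℤ}
    (h : IsStrongHeatSolution τ u r u' uxx) (k : IsStrongHeatSolution τ w q w' wxx)
    (hω : Continuous ω) (hΦ : ∀ σ, HasDerivAt Φ (dirichletEigenvalue n - ω σ) σ)
    (hs : τ < s) (hst : s < t)
    (heq : ∀ᵐ σ ∂(volume.restrict (Ioc s t)), r σ - ω σ • u σ = q σ - ω σ • w σ) :
    Real.exp (Φ s) * sineCoeff n (u s - w s) = Real.exp (Φ t) * sineCoeff n (u t - w t) := by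
  have hu := h.exp_mul_sineCoeff_eq hΦ (by fun_prop) n hs hst
  have hw := k.exp_mul_sineCoeff_eq hΦ (by fun_prop) n hs hst
  have hintegral : ∫ σ in s..t, Real.exp (Φ σ) * (sineCoeff n (r σ) +
        (dirichletEigenvalue n - ω σ - dirichletEigenvalue n) * sineCoeff n (u σ))
      = ∫ σ in s..t, Real.exp (Φ σ) * (sineCoeff n (q σ) +
        (dirichletEigenvalue n - ω σ - dirichletEigenvalue n) * sineCoeff n (w σ)) := by
    rw [intervalIntegral.integral_of_le hst.le, intervalIntegral.integral_of_le hst.le]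
    refine integral_congr_ae ?_
    filter_upwards [heq] with σ hσ
    have hcoeff := congrArg (sineCoeff n) hσ
    simp only [map_sub, map_smul, smul_eq_mul] at hcoeff
    linear_combination Real.exp (Φ σ) * hcoeff
  rw [map_sub, map_sub, mul_sub, mul_sub, hu, hw, hintegral]
  ring

lemma eq_of_source_sub_smul_eq {w q w' wxx : ℝ → Hsp} {ω : ℝ → ℝ}
    (h : IsStrongHeatSolution τ u r u' uxx) (k : IsStrongHeatSolution τ w q w' wxx)
    (hω : Continuous ω) (hτ : u τ = w τ) (ht : τ < t)
    (heq : ∀ᵐ σ ∂(volume.restrict (Ioi τ)), r σ - ω σ • u σ = q σ - ω σ • w σ) : u t = w t := by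
  refine sub_eq_zero.1 (eq_of_sineCoeff_eq fun n ↦ ?_)
  let Φ (σ : ℝ) : ℝ := ∫ z in τ..σ, (dirichletEigenvalue n - ω z)
  have hΦ (σ : ℝ) : HasDerivAt Φ (dirichletEigenvalue n - ω σ) σ :=
    ((by fun_prop : Continuous fun z ↦ dirichletEigenvalue n - ω z).integral_hasStrictDerivAt
      τ σ).hasDerivAt
  let E (σ : ℝ) : ℝ := Real.exp (Φ σ) * sineCoeff n (u σ - w σ)
  have hconst : ∀ᶠ s in 𝓝[>] τ, E s = E t := by
    filter_upwards [Ioo_mem_nhdsGT ht] with s hs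
    exact h.exp_mul_sineCoeff_eq_of_source_sub_smul_eq k hω hΦ hs.1 hs.2
      (ae_restrict_Ioc_of_Ioi hs.1.le heq)
  have hcont : ContinuousWithinAt E (Ioi τ) τ :=
    ((hΦ τ).continuousAt.rexp.continuousWithinAt).mul
      ((sineCoeff n).continuous.continuousAt.comp_continuousWithinAt
        (((h.cont τ self_mem_Ici).sub (k.cont τ self_mem_Ici)).mono Ioi_subset_Ici_self))
  have hE : E t = E τ := tendsto_nhds_unique (tendsto_const_nhds.congr' (hconst.mono
    fun s hs ↦ hs.symm)) hcont
  rw [map_zero]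
  have hEτ : E τ = 0 := by simp [E, hτ]
  exact (mul_eq_zero.1 (hE.trans hEτ)).resolve_left (Real.exp_ne_zero _)

end IsStrongHeatSolution

end HeatEquation

section Inclusion

lemma eq_one_of_mem_heaviside {s h : ℝ} (hs : 0 < s) (hh : h ∈ heaviside s) : h = 1 := by
  simpa [heaviside, hs.not_gt, hs.ne'] using hh

lemma IsPositive.ae_pos {v : Hsp} (hv : IsPositive v) : ∀ᵐ x ∂μ01, 0 < v x := by
  obtain ⟨vt, -, hae, hpos⟩ := hv
  filter_upwards [hae, ae_mem_Ioo_μ01] with x hx hx01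
  exact hx ▸ hpos x hx01

namespace IsStrongSolutionWith

variable {b ω : ℝ → ℝ} {τ s t : ℝ} {u r u' uxx : ℝ → Hsp}

lemma isStrongHeatSolution (h : IsStrongSolutionWith b ω τ u r u' uxx) :
    IsStrongHeatSolution τ u r u' uxx :=
  ⟨h.cont, h.rmem, h.dom, h.eq, h.fund⟩

lemma ae_source_nonneg (h : IsStrongSolutionWith b ω τ u r u' uxx) (hb : ∀ t, 0 ≤ b t)
    (hω : ∀ t, 0 ≤ ω t) (hu : NonnegOn u τ) (hs : τ < s) (hst : s < t) :
    ∀ᵐ σ ∂(volume.restrict (Ioc s t)), 0 ≤ᵐ[μ01] r σ := by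
  filter_upwards [h.isStrongHeatSolution.ae_source_nonneg_of_eq_zero hu hs hst,
    ae_restrict_Ioc_of_Ioi hs.le h.sel, ae_restrict_mem measurableSet_Ioc] with σ hzero hsel hσ
  filter_upwards [hzero, hsel, hu σ (hs.trans hσ.1).le] with x hzero ⟨p, hp, hr⟩ hux
  rcases hux.eq_or_lt' with hux0 | hux_pos
  · exact hzero hux0
  · rw [hr, eq_one_of_mem_heaviside hux_pos hp, mul_one]
    exact add_nonneg (hb σ) (mul_nonneg (hω σ) hux)

lemma isPositive (h : IsStrongSolutionWith b ω τ u r u' uxx) (hb : ∀ t, 0 ≤ b t)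
    (hω : ∀ t, 0 ≤ ω t) (hu : NonnegOn u τ) (hτ : u τ ≠ 0) (ht : τ < t) : IsPositive (u t) := by
  have hne : ∀ᶠ s in 𝓝[>] τ, u s ≠ 0 :=
    ((h.cont τ self_mem_Ici).mono Ioi_subset_Ici_self).eventually_ne hτ
  obtain ⟨s, hus, hs⟩ := (hne.and (Ioo_mem_nhdsGT ht)).exists
  exact h.isStrongHeatSolution.isPositive_of_source_nonneg hs.1 hs.2 (hu s hs.1.le) hus
    (h.ae_source_nonneg hb hω hu hs.1 hs.2)

lemma ae_source_sub_smul_eq_const (h : IsStrongSolutionWith b ω τ u r u' uxx)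
    (hpos : ∀ t, τ < t → IsPositive (u t)) :
    ∀ᵐ σ ∂(volume.restrict (Ioi τ)), r σ - ω σ • u σ = Lp.const 2 μ01 (b σ) := by
  filter_upwards [h.sel, ae_restrict_mem measurableSet_Ioi] with σ hsel hσ
  refine Lp.ext ?_
  filter_upwards [hsel, (hpos σ hσ).ae_pos, Lp.coeFn_sub (r σ) (ω σ • u σ),
    Lp.coeFn_smul (ω σ) (u σ), Lp.coeFn_const 2 μ01 (b σ)] with x ⟨p, hp, hr⟩ hux hsub hsmul hconst
  rw [hsub, hconst, Pi.sub_apply, hsmul, Pi.smul_apply, hr, eq_one_of_mem_heaviside hux hp,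
    Function.const_apply, smul_eq_mul]
  ring

end IsStrongSolutionWith

end Inclusion

theorem statement1_general {b ω : ℝ → ℝ} {τ : ℝ} (hb : ∀ t, 0 ≤ b t) (hω_cont : Continuous ω)
    (hω : ∀ t, 0 ≤ ω t) {u : ℝ → Hsp} (hsol : IsStrongSolution b ω τ u) (hτ : u τ ≠ 0)
    (hu : NonnegOn u τ) :
    (∀ w : ℝ → Hsp, IsStrongSolution b ω τ w → w τ = u τ → NonnegOn w τ →
      ∀ t, τ ≤ t → w t = u t) ∧
    ∀ t, τ < t → IsPositive (u t) := by
  obtain ⟨r, u', uxx, h⟩ := hsol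
  have hu_pos : ∀ t, τ < t → IsPositive (u t) := fun t ht ↦ h.isPositive hb hω hu hτ ht
  refine ⟨?_, hu_pos⟩
  rintro w ⟨q, w', wxx, k⟩ hwτ hw t ht
  have hw_pos : ∀ t, τ < t → IsPositive (w t) := fun t ht ↦ k.isPositive hb hω hw (hwτ ▸ hτ) ht
  rcases ht.eq_or_lt with rfl | ht
  · exact hwτ
  · refine k.isStrongHeatSolution.eq_of_source_sub_smul_eq h.isStrongHeatSolution hω_cont hwτ ht ?_
    filter_upwards [h.ae_source_sub_smul_eq_const hu_pos, k.ae_source_sub_smul_eq_const hw_pos]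
      with σ hr hq using hq.trans hr.symm

/-- for a non-negative, not identically zero initial datum, a
non-negative strong solution is unique in the class of non-negative solutions
and is positive for every `t > τ`. -/
theorem statement1
    (b ω : ℝ → ℝ) (b0 b1 ω0 ω1 τ : ℝ) (hC : Cond1 b ω b0 b1 ω0 ω1)
    (uτ : Hsp) (huτ0 : ∀ᵐ x ∂μ01, 0 ≤ uτ x) (huτne : uτ ≠ 0)
    (u : ℝ → Hsp)
    (hsol : IsStrongSolution b ω τ u) (hinit : u τ = uτ) (hnneg : NonnegOn u τ) :
    (∀ w : ℝ → Hsp, IsStrongSolution b ω τ w → w τ = uτ → NonnegOn w τ →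
      ∀ t, τ ≤ t → w t = u t) ∧
    ∀ t, τ < t → IsPositive (u t) := by
  subst hinit
  exact statement1_general (fun t ↦ (hC.b0pos.trans_le (hC.blb t)).le) hC.contω
    (fun t ↦ hC.ω0nonneg.trans (hC.ωlb t)) hsol huτne hnneg

end
end
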